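/- For any ε ∈ (0,1), any α > 0 and any pair of distributions (P1,P2) on a finite alphabet X with V(P1,P2,α) > 0, there exist a constant C > 0 and an integer n0 such that for all n ≥ n0, | ξ*(n,α,ε|P1,P2) − GJS(P1,P2,α) − sqrt(V(P1,P2,α)/n)·Φ^{-1}(ε) | ≤ C·(log n)/n. -/

import Mathlib

open Filter Topology MeasureTheory

namespace Classification

variable {X : Type*} [Fintype X] [DecidableEq X]

/-- `P` is a probability mass function on the finite alphabet `X`. -/
def IsDist (P : X → ℝ) : Prop := (∀ x, 0 ≤ P x) ∧ ∑ x, P x = 1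

/-- `P` has full support. -/
def FullSupport (P : X → ℝ) : Prop := ∀ x, 0 < P x

/-- Empirical distribution (type) of a sequence `x : Fin m → X`. -/
noncomputable def empDist {m : ℕ} (x : Fin m → X) : X → ℝ :=
  fun a => ((Finset.univ.filter fun i => x i = a).card : ℝ) / m

/-- Real-valued KL divergence with the usual `0 · log 0 = 0` convention. -/
noncomputable def klDivR (Q P : X → ℝ) : ℝ := ∑ x, Q x * Real.log (Q x / P x)

open Classical in
/-- Extended-real-valued KL divergence: `⊤` when `Q` is not absolutely continuous w.r.t. `P`. -/
noncomputable def klDivE (Q P : X → ℝ) : EReal :=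
  if ∀ x, P x = 0 → Q x = 0 then ((klDivR Q P : ℝ) : EReal) else ⊤

/-- The mixture `(α P1 + P2) / (1 + α)`. -/
noncomputable def mix (P1 P2 : X → ℝ) (α : ℝ) : X → ℝ :=
  fun x => (α * P1 x + P2 x) / (1 + α)

/-- Generalized Jensen–Shannon divergence
`GJS(P1,P2,α) = α D(P1 ‖ (αP1+P2)/(1+α)) + D(P2 ‖ (αP1+P2)/(1+α))`. -/
noncomputable def GJS (P1 P2 : X → ℝ) (α : ℝ) : ℝ :=
  α * klDivR P1 (mix P1 P2 α) + klDivR P2 (mix P1 P2 α)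

/-- Training sequence length `N = ⌈α n⌉`. -/
noncomputable def trainLen (α : ℝ) (n : ℕ) : ℕ := ⌈α * (n : ℝ)⌉₊

/-- Probability of observing the sequence `x` under i.i.d. sampling from `P`. -/
noncomputable def seqProb (P : X → ℝ) {m : ℕ} (x : Fin m → X) : ℝ := ∏ i, P (x i)

/-- A binary classification test: output `true` means "declare H₂",
`false` means "declare H₁". -/
abbrev BTest (X : Type*) (α : ℝ) (n : ℕ) : Type _ :=
  (Fin (trainLen α n) → X) → (Fin (trainLen α n) → X) → (Fin n → X) → Bool

/-- Type-I error probability: probability of declaring `H₂` when `Y^n ~ P1` (hypothesis H₁). -/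
noncomputable def beta1 {α : ℝ} {n : ℕ} (φ : BTest X α n) (P1 P2 : X → ℝ) : ℝ :=
  ∑ x1 : Fin (trainLen α n) → X, ∑ x2 : Fin (trainLen α n) → X, ∑ y : Fin n → X,
    if φ x1 x2 y = true then seqProb P1 x1 * seqProb P2 x2 * seqProb P1 y else 0

/-- Type-II error probability: probability of declaring `H₁` when `Y^n ~ P2` (hypothesis H₂). -/
noncomputable def beta2 {α : ℝ} {n : ℕ} (φ : BTest X α n) (P1 P2 : X → ℝ) : ℝ :=
  ∑ x1 : Fin (trainLen α n) → X, ∑ x2 : Fin (trainLen α n) → X, ∑ y : Fin n → X,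
    if φ x1 x2 y = false then seqProb P1 x1 * seqProb P2 x2 * seqProb P2 y else 0

open Classical in
/-- Gutman's test with threshold `lam`: declare `H₁` iff `GJS(T̂_{x₁}, T̂_y, α) ≤ lam`. -/
noncomputable def gutman (α lam : ℝ) (n : ℕ) : BTest X α n :=
  fun x1 _ y => if GJS (empDist x1) (empDist y) α ≤ lam then false else true

open Classical in
/-- `- log x` as an extended real, with `⊤` at `x = 0`. -/
noncomputable def negLogE (x : ℝ) : EReal :=
  if x = 0 then ⊤ else ((-Real.log x : ℝ) : EReal)

/-- Gutman's exponent function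
`F(P1,P2,α,lam) = min { α D(Q1‖P1) + D(Q2‖P2) : GJS(Q1,Q2,α) ≤ lam }` (as an inf in `EReal`). -/
noncomputable def Fexp (P1 P2 : X → ℝ) (α lam : ℝ) : EReal :=
  sInf {v : EReal | ∃ Q1 Q2 : X → ℝ, IsDist Q1 ∧ IsDist Q2 ∧ GJS Q1 Q2 α ≤ lam ∧
    v = (α : EReal) * klDivE Q1 P1 + klDivE Q2 P2}

/-- Expectation of `f` under `P`. -/
noncomputable def expect (P : X → ℝ) (f : X → ℝ) : ℝ := ∑ x, P x * f x

/-- Variance of `f` under `P`. -/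
noncomputable def varD (P : X → ℝ) (f : X → ℝ) : ℝ :=
  expect P (fun x => (f x - expect P f) ^ 2)

/-- Information density `ı₁(x) = log((1+α) P1(x) / (α P1(x) + P2(x)))`. -/
noncomputable def iDens1 (P1 P2 : X → ℝ) (α : ℝ) (x : X) : ℝ :=
  Real.log ((1 + α) * P1 x / (α * P1 x + P2 x))

/-- Information density `ı₂(x) = log((1+α) P2(x) / (α P1(x) + P2(x)))`. -/
noncomputable def iDens2 (P1 P2 : X → ℝ) (α : ℝ) (x : X) : ℝ :=
  Real.log ((1 + α) * P2 x / (α * P1 x + P2 x))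

/-- The dispersion `V(P1,P2,α) = α Var_{P1}[ı₁] + Var_{P2}[ı₂]`. -/
noncomputable def disp (P1 P2 : X → ℝ) (α : ℝ) : ℝ :=
  α * varD P1 (iDens1 P1 P2 α) + varD P2 (iDens2 P1 P2 α)

/-- The standard Gaussian cumulative distribution function `Φ`. -/
noncomputable def stdCDF (x : ℝ) : ℝ :=
  (Real.sqrt (2 * Real.pi))⁻¹ * ∫ t in Set.Iic x, Real.exp (-t ^ 2 / 2)

/-- The inverse standard Gaussian cdf `Φ⁻¹`. -/
noncomputable def stdCDFInv (p : ℝ) : ℝ := sInf {x : ℝ | p ≤ stdCDF x}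

/-- The non-asymptotic fundamental limit `λ*(n, α, ε | P1, P2)` for binary classification. -/
noncomputable def lamStar (α : ℝ) (n : ℕ) (ε : ℝ) (P1 P2 : X → ℝ) : ℝ :=
  sSup {lam : ℝ | 0 ≤ lam ∧ ∃ φ : BTest X α n,
    (∀ Q1 Q2 : X → ℝ, IsDist Q1 → IsDist Q2 →
      beta1 φ Q1 Q2 ≤ Real.exp (-((n : ℝ) * lam))) ∧
    beta2 φ P1 P2 ≤ ε}

/-- Rényi divergence of order `γ`. -/
noncomputable def renyi (γ : ℝ) (P1 P2 : X → ℝ) : ℝ :=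
  (1 / (γ - 1)) * Real.log (∑ x, P1 x ^ γ * P2 x ^ (1 - γ))

/-- The fundamental limit `τ*(n, α, ε | φ_n^Gut, P1, P2)` in the dual setting for Gutman's test. -/
noncomputable def tauStarGut (α : ℝ) (n : ℕ) (ε : ℝ) (P1 P2 : X → ℝ) : ℝ :=
  sSup {τ : ℝ | 0 ≤ τ ∧ ∃ lam : ℝ, 0 ≤ lam ∧
    (∀ Q1 Q2 : X → ℝ, IsDist Q1 → IsDist Q2 →
      beta1 (gutman α lam n) Q1 Q2 ≤ ε) ∧
    beta2 (gutman α lam n) P1 P2 ≤ Real.exp (-((n : ℝ) * τ))}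

/-- A two-sample homogeneity test: `true` means "declare H₂" (different distributions). -/
abbrev TTest (X : Type*) (α : ℝ) (n : ℕ) : Type _ :=
  (Fin (trainLen α n) → X) → (Fin n → X) → Bool

/-- False-alarm probability of a two-sample test. -/
noncomputable def betaFA {α : ℝ} {n : ℕ} (φ : TTest X α n) (P1 : X → ℝ) : ℝ :=
  ∑ x : Fin (trainLen α n) → X, ∑ y : Fin n → X,
    if φ x y = true then seqProb P1 x * seqProb P1 y else 0

/-- Miss-detection probability of a two-sample test. -/
noncomputable def betaMD {α : ℝ} {n : ℕ} (φ : TTest X α n) (P1 P2 : X → ℝ) : ℝ :=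
  ∑ x : Fin (trainLen α n) → X, ∑ y : Fin n → X,
    if φ x y = false then seqProb P1 x * seqProb P2 y else 0

/-- The fundamental limit `ξ*(n, α, ε | P1, P2)` for two-sample homogeneity testing. -/
noncomputable def xiStar (α : ℝ) (n : ℕ) (ε : ℝ) (P1 P2 : X → ℝ) : ℝ :=
  sSup {lam : ℝ | 0 ≤ lam ∧ ∃ φ : TTest X α n,
    (∀ Q1 : X → ℝ, IsDist Q1 → betaFA φ Q1 ≤ Real.exp (-((n : ℝ) * lam))) ∧
    betaMD φ P1 P2 ≤ ε}

/-- An M-ary classification test with the rejection option: `some j` means "declare H_j",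
`none` means "reject". -/
abbrev MTest (X : Type*) (M : ℕ) (α : ℝ) (n : ℕ) : Type _ :=
  (Fin M → Fin (trainLen α n) → X) → (Fin n → X) → Option (Fin M)

/-- Type-`j` error probability: probability of declaring some hypothesis other than
`H_j` or rejection, under `H_j`. -/
noncomputable def betaM {M : ℕ} {α : ℝ} {n : ℕ} (ψ : MTest X M α n)
    (P : Fin M → X → ℝ) (j : Fin M) : ℝ :=
  ∑ xs : Fin M → Fin (trainLen α n) → X, ∑ y : Fin n → X,
    if ψ xs y ≠ some j ∧ ψ xs y ≠ none then
      (∏ i, seqProb (P i) (xs i)) * seqProb (P j) y else 0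

/-- Type-`j` rejection probability: probability of rejecting under `H_j`. -/
noncomputable def zetaM {M : ℕ} {α : ℝ} {n : ℕ} (ψ : MTest X M α n)
    (P : Fin M → X → ℝ) (j : Fin M) : ℝ :=
  ∑ xs : Fin M → Fin (trainLen α n) → X, ∑ y : Fin n → X,
    if ψ xs y = none then (∏ i, seqProb (P i) (xs i)) * seqProb (P j) y else 0

/-- The fundamental limit `λ*(n, α, ε | P)` for M-ary classification with rejection. -/
noncomputable def lamStarM (M : ℕ) (α : ℝ) (n : ℕ) (ε : Fin M → ℝ)
    (P : Fin M → X → ℝ) : ℝ :=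
  sSup {lam : ℝ | 0 ≤ lam ∧ ∃ ψ : MTest X M α n,
    (∀ Q : Fin M → X → ℝ, (∀ i, IsDist (Q i)) → ∀ j,
      betaM ψ Q j ≤ Real.exp (-((n : ℝ) * lam))) ∧
    (∀ j, zetaM ψ P j ≤ ε j)}

open Classical in
/-- Gutman's M-ary test with rejection and threshold `lam`. -/
noncomputable def gutmanM (M : ℕ) [NeZero M] (α lam : ℝ) (n : ℕ) : MTest X M α n :=
  fun xs y =>
    if ∃ i k : Fin M, i ≠ k ∧ GJS (empDist (xs i)) (empDist y) α ≤ lam ∧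
        GJS (empDist (xs k)) (empDist y) α ≤ lam then none
    else if h : ∃ j : Fin M, GJS (empDist (xs j)) (empDist y) α ≤ lam then some h.choose
    else some 0

/-- The fundamental limit `τ*(n, α, ε | Ψ_n^Gut, P)` in the dual setting for
Gutman's M-ary test. -/
noncomputable def tauStarGutM (M : ℕ) [NeZero M] (α : ℝ) (n : ℕ) (ε : ℝ)
    (P : Fin M → X → ℝ) : ℝ :=
  sSup {τ : ℝ | 0 ≤ τ ∧ ∃ lam : ℝ, 0 ≤ lam ∧
    (∀ Q : Fin M → X → ℝ, (∀ i, IsDist (Q i)) → ∀ j,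
      betaM (gutmanM M α lam n) Q j ≤ ε) ∧
    (∀ j, zetaM (gutmanM M α lam n) P j ≤ Real.exp (-((n : ℝ) * τ)))}

/-- Generalized divergence of three distributions
`D_γ(P1,P2,P3) = (γ-1)⁻¹ log Σ_x P1(x)^{1-γ} P2(x)^{γ/2} P3(x)^{γ/2}`. -/
noncomputable def genDiv (γ : ℝ) (P1 P2 P3 : X → ℝ) : ℝ :=
  (1 / (γ - 1)) * Real.log (∑ x, P1 x ^ (1 - γ) * P2 x ^ (γ / 2) * P3 x ^ (γ / 2))

/-- A binary classification test with the rejection option: `some 0` means "declare H₁",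
`some 1` means "declare H₂", `none` means "reject". -/
abbrev RTest (X : Type*) (α : ℝ) (n : ℕ) : Type _ :=
  (Fin (trainLen α n) → X) → (Fin (trainLen α n) → X) → (Fin n → X) → Option (Fin 2)

/-- Type-1 error probability of a rejection test: declare `H₂` under `H₁`. -/
noncomputable def beta1R {α : ℝ} {n : ℕ} (ψ : RTest X α n) (P1 P2 : X → ℝ) : ℝ :=
  ∑ x1 : Fin (trainLen α n) → X, ∑ x2 : Fin (trainLen α n) → X, ∑ y : Fin n → X,
    if ψ x1 x2 y = some 1 then seqProb P1 x1 * seqProb P2 x2 * seqProb P1 y else 0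

/-- Type-2 error probability of a rejection test: declare `H₁` under `H₂`. -/
noncomputable def beta2R {α : ℝ} {n : ℕ} (ψ : RTest X α n) (P1 P2 : X → ℝ) : ℝ :=
  ∑ x1 : Fin (trainLen α n) → X, ∑ x2 : Fin (trainLen α n) → X, ∑ y : Fin n → X,
    if ψ x1 x2 y = some 0 then seqProb P1 x1 * seqProb P2 x2 * seqProb P2 y else 0

open Classical in
/-- Type-`j` rejection probability of a binary rejection test. -/
noncomputable def zetaR {α : ℝ} {n : ℕ} (ψ : RTest X α n) (P1 P2 : X → ℝ) (j : Fin 2) : ℝ :=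
  ∑ x1 : Fin (trainLen α n) → X, ∑ x2 : Fin (trainLen α n) → X, ∑ y : Fin n → X,
    if ψ x1 x2 y = none then
      seqProb P1 x1 * seqProb P2 x2 * seqProb (if j = 0 then P1 else P2) y else 0

/-- A binary test is type-based if it depends on the data only through the
triple of empirical distributions. -/
def TypeBasedB {α : ℝ} {n : ℕ} (φ : BTest X α n) : Prop :=
  ∀ x1 x1' x2 x2' : Fin (trainLen α n) → X, ∀ y y' : Fin n → X,
    empDist x1 = empDist x1' → empDist x2 = empDist x2' → empDist y = empDist y' →
      φ x1 x2 y = φ x1' x2' y'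

/-- An M-ary test is type-based if it depends on the data only through the
tuple of empirical distributions. -/
def TypeBasedM {M : ℕ} {α : ℝ} {n : ℕ} (ψ : MTest X M α n) : Prop :=
  ∀ xs xs' : Fin M → Fin (trainLen α n) → X, ∀ y y' : Fin n → X,
    (∀ i, empDist (xs i) = empDist (xs' i)) → empDist y = empDist y' →
      ψ xs y = ψ xs' y'

open Classical in
/-- Probability of an event under hypothesis `H₂` in the binary setup. -/
noncomputable def prH2E (α : ℝ) (n : ℕ) (P1 P2 : X → ℝ)
    (E : (Fin (trainLen α n) → X) → (Fin (trainLen α n) → X) → (Fin n → X) → Prop) : ℝ :=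
  ∑ x1 : Fin (trainLen α n) → X, ∑ x2 : Fin (trainLen α n) → X, ∑ y : Fin n → X,
    if E x1 x2 y then seqProb P1 x1 * seqProb P2 x2 * seqProb P2 y else 0

open Classical in
/-- Probability of an event under hypothesis `H_j` in the M-ary setup. -/
noncomputable def prHjM (M : ℕ) (α : ℝ) (n : ℕ) (P : Fin M → X → ℝ) (j : Fin M)
    (E : (Fin M → Fin (trainLen α n) → X) → (Fin n → X) → Prop) : ℝ :=
  ∑ xs : Fin M → Fin (trainLen α n) → X, ∑ y : Fin n → X,
    if E xs y then (∏ i, seqProb (P i) (xs i)) * seqProb (P j) y else 0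

/-- `η_n(α) = |X| log(n+1)/n + 2|X| log(1+αn)/(αn)`. -/
noncomputable def etaN (X : Type*) [Fintype X] (α : ℝ) (n : ℕ) : ℝ :=
  (Fintype.card X : ℝ) * Real.log ((n : ℝ) + 1) / n +
    2 * (Fintype.card X : ℝ) * Real.log (1 + α * n) / (α * n)

/-- `η_{n,M} = M |X| log(nα+1)/(nα) + |X| log(n+1)/n`. -/
noncomputable def etaNM (X : Type*) [Fintype X] (M : ℕ) (α : ℝ) (n : ℕ) : ℝ :=
  (M : ℝ) * (Fintype.card X : ℝ) * Real.log ((n : ℝ) * α + 1) / ((n : ℝ) * α) +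
    (Fintype.card X : ℝ) * Real.log ((n : ℝ) + 1) / n

/-- `Q` is an `m`-type: the empirical distribution of some sequence of length `m`. -/
def IsTypeDist (m : ℕ) (Q : X → ℝ) : Prop := ∃ x : Fin m → X, empDist x = Q

/-- The type-restricted exponent function `F_n`. -/
noncomputable def Fn (n : ℕ) (P1 P2 : X → ℝ) (α lam : ℝ) : ℝ :=
  sInf {v : ℝ | ∃ Q1 Q2 : X → ℝ, IsTypeDist (trainLen α n) Q1 ∧ IsTypeDist n Q2 ∧
    GJS Q1 Q2 α ≤ lam ∧ v = α * klDivR Q1 P1 + klDivR Q2 P2}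

/-- The second smallest value of a finite family of reals:
`min_{i ≠ j} max (v i) (v j)`. -/
noncomputable def secondMin {M : ℕ} (v : Fin M → ℝ) : ℝ :=
  sInf {t : ℝ | ∃ i j : Fin M, i ≠ j ∧ t = max (v i) (v j)}

/-- The tilted distribution `P^{(γ)}` with `γ = α/(1+α)`. -/
noncomputable def tilt (α : ℝ) (P1 P2 : X → ℝ) : X → ℝ :=
  fun x => P1 x ^ (α / (1 + α)) * P2 x ^ (1 / (1 + α)) /
    ∑ a, P1 a ^ (α / (1 + α)) * P2 a ^ (1 / (1 + α))

/-! Concatenate both sequences into a pooled sample of size `M = N + n`. The i.i.d. law with letter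
distribution `mix P1 P2 α` is the null hypothesis closest to `(P1, P2)`, and the log-likelihood
ratio `L` between the two has mean `n * GJS + O(1)` and variance `n * disp + O(1)` under `(P1, P2)`,
so the Berry–Esseen theorem locates its `ε`-quantile up to `O(1)`.

Converse: a change of measure from `(P1, P2)` to `mix P1 P2 α` shows that a test with false-alarm
exponent `λ` misses at least when `L < n * λ - (log n) / 2`, up to probability `1 / √n`.

Achievability: reject when the likelihood under `(P1, P2)` exceeds the likelihood under *every*
i.i.d. law by a factor `exp u`; the false-alarm probability is then at most `exp (-u)` by
construction. The largest i.i.d. likelihood is that of the empirical distribution, whose logarithm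
exceeds that for `mix P1 P2 α` by at most a `χ²` term, which Hoeffding's inequality makes
`O(log M)` outside an event of probability `O(M⁻²)`. So rejection is implied by
`L ≥ u + O(log n)`.

The Berry–Esseen bound, for bounded independent summands, is proved by Stein's method, with a
ramp function in place of the indicator of a half-line. -/

section Gaussian

open ProbabilityTheory

/-- The standard Gaussian density, the derivative of `stdCDF`. -/
noncomputable abbrev stdPDF : ℝ → ℝ := gaussianPDFReal 0 1

lemma stdPDF_apply (x : ℝ) : stdPDF x = (√(2 * Real.pi))⁻¹ * Real.exp (-x ^ 2 / 2) := by
  simp [gaussianPDFReal]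

lemma stdPDF_pos (x : ℝ) : 0 < stdPDF x := gaussianPDFReal_pos 0 1 x one_ne_zero

lemma stdPDF_neg (x : ℝ) : stdPDF (-x) = stdPDF x := by simp [stdPDF_apply]

lemma stdPDF_abs (x : ℝ) : stdPDF |x| = stdPDF x := by simp [stdPDF_apply]

lemma integrable_stdPDF : Integrable stdPDF := integrable_gaussianPDFReal 0 1

lemma integral_stdPDF : ∫ x, stdPDF x = 1 := integral_gaussianPDFReal_eq_one 0 one_ne_zero

@[fun_prop]
lemma continuous_stdPDF : Continuous stdPDF := by
  simp_rw [funext stdPDF_apply]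
  fun_prop

lemma stdPDF_le_one (x : ℝ) : stdPDF x ≤ 1 := by
  have hsqrt : 1 ≤ √(2 * Real.pi) := Real.one_le_sqrt.2 (by linarith [Real.pi_gt_three])
  rw [stdPDF_apply]
  exact mul_le_one₀ (inv_le_one_of_one_le₀ hsqrt) (Real.exp_pos _).le
    (Real.exp_le_one_iff.2 (by linarith [sq_nonneg x]))

lemma hasDerivAt_stdPDF (x : ℝ) : HasDerivAt stdPDF (-x * stdPDF x) x := by
  have hexponent : HasDerivAt (fun x : ℝ => -x ^ 2 / 2) (-x) x := by
    convert! ((hasDerivAt_pow 2 x).neg).div_const 2 using 1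
    ring
  simp_rw [funext stdPDF_apply]
  convert! hexponent.exp.const_mul (√(2 * Real.pi))⁻¹ using 1
  ring

lemma integrable_mul_stdPDF : Integrable fun x => x * stdPDF x := by
  refine ((integrable_mul_exp_neg_mul_sq (b := 1 / 2) (by norm_num)).const_mul
    (√(2 * Real.pi))⁻¹).congr (.of_forall fun x => ?_)
  simp only [stdPDF_apply]
  rw [mul_left_comm]
  ring_nf

lemma tendsto_stdPDF_atTop : Tendsto stdPDF atTop (𝓝 0) := by
  have hexp : Tendsto (fun x : ℝ => Real.exp (-x ^ 2 / 2)) atTop (𝓝 0) :=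
    Real.tendsto_exp_atBot.comp
      ((tendsto_neg_atTop_atBot.comp (tendsto_pow_atTop two_ne_zero)).atBot_div_const two_pos)
  simpa [funext stdPDF_apply] using hexp.const_mul (√(2 * Real.pi))⁻¹

lemma integral_Ioi_mul_stdPDF (w : ℝ) : ∫ x in Set.Ioi w, x * stdPDF x = stdPDF w := by
  have h := integral_Ioi_of_hasDerivAt_of_tendsto' (a := w) (f := fun x => -stdPDF x)
    (f' := fun x => x * stdPDF x) (m := -0)
    (fun x _ => by simpa using (hasDerivAt_stdPDF x).fun_neg)
    integrable_mul_stdPDF.integrableOn tendsto_stdPDF_atTop.neg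
  simpa using h

lemma mul_integral_Ioi_stdPDF_le (w : ℝ) : w * ∫ x in Set.Ioi w, stdPDF x ≤ stdPDF w := by
  rw [← integral_Ioi_mul_stdPDF w, ← integral_const_mul]
  exact setIntegral_mono_on (integrable_stdPDF.const_mul w).integrableOn
    integrable_mul_stdPDF.integrableOn measurableSet_Ioi
    fun x hx => mul_le_mul_of_nonneg_right (le_of_lt hx) (stdPDF_pos x).le

lemma stdPDF_add_le {w x : ℝ} (hw : 0 ≤ w) (hx : 0 ≤ x) :
    stdPDF (x + w) ≤ stdPDF w * Real.exp (-(1 / 2) * x ^ 2) := by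
  rw [stdPDF_apply, stdPDF_apply, mul_assoc, ← Real.exp_add]
  gcongr
  nlinarith [mul_nonneg hw hx]

lemma integral_Ioi_stdPDF_le {w : ℝ} (hw : 0 ≤ w) :
    ∫ x in Set.Ioi w, stdPDF x ≤ 2 * stdPDF w := by
  have hsqrt : √(Real.pi / (1 / 2)) / 2 ≤ 2 := by
    have : √(Real.pi / (1 / 2)) ≤ 4 :=
      Real.sqrt_le_iff.2 ⟨by norm_num, by linarith [Real.pi_lt_four]⟩
    linarith
  have hgauss : Integrable fun x : ℝ => Real.exp (-(1 / 2) * x ^ 2) :=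
    integrable_exp_neg_mul_sq (by norm_num)
  calc ∫ x in Set.Ioi w, stdPDF x = ∫ x in Set.Ioi 0, stdPDF (x + w) := by
        simpa using ((measurePreserving_add_right volume w).setIntegral_preimage_emb
          (measurableEmbedding_addRight w) stdPDF (Set.Ioi w)).symm
    _ ≤ ∫ x in Set.Ioi 0, stdPDF w * Real.exp (-(1 / 2) * x ^ 2) :=
        setIntegral_mono_on (integrable_stdPDF.comp_add_right w).integrableOn
          (hgauss.const_mul _).integrableOn measurableSet_Ioi
          fun x hx => stdPDF_add_le hw (le_of_lt hx)
    _ = stdPDF w * (√(Real.pi / (1 / 2)) / 2) := by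
        rw [integral_const_mul, integral_gaussian_Ioi]
    _ ≤ 2 * stdPDF w := by
        rw [mul_comm]
        exact mul_le_mul_of_nonneg_right hsqrt (stdPDF_pos w).le

lemma integral_Iic_stdPDF (w : ℝ) :
    ∫ x in Set.Iic w, stdPDF x = ∫ x in Set.Ioi (-w), stdPDF x := by
  simpa only [stdPDF_neg] using integral_comp_neg_Iic w stdPDF

lemma stdCDF_eq_integral (w : ℝ) : stdCDF w = ∫ x in Set.Iic w, stdPDF x := by
  simp only [stdCDF, stdPDF_apply, integral_const_mul]

lemma stdCDF_eq_cdf : stdCDF = cdf (gaussianReal 0 1) := by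
  ext w
  rw [cdf_eq_real, measureReal_def, gaussianReal_apply_eq_integral 0 one_ne_zero,
    ENNReal.toReal_ofReal (integral_nonneg fun x => (stdPDF_pos x).le), stdCDF_eq_integral]

lemma hasDerivAt_integral_Iic {g : ℝ → ℝ} (hg : Continuous g) (hint : Integrable g) (w : ℝ) :
    HasDerivAt (fun w => ∫ x in Set.Iic w, g x) (g w) w := by
  have hsplit (u : ℝ) : ∫ x in Set.Iic u, g x = (∫ x in w..u, g x) + ∫ x in Set.Iic w, g x := by
    rw [← intervalIntegral.integral_Iic_sub_Iic hint.integrableOn hint.integrableOn,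
      sub_add_cancel]
  rw [funext hsplit]
  exact (intervalIntegral.integral_hasDerivAt_right hint.intervalIntegrable
    hg.aestronglyMeasurable.stronglyMeasurableAtFilter hg.continuousAt).add_const _

lemma hasDerivAt_stdCDF (w : ℝ) : HasDerivAt stdCDF (stdPDF w) w := by
  simpa only [funext stdCDF_eq_integral] using
    hasDerivAt_integral_Iic continuous_stdPDF integrable_stdPDF w

lemma differentiable_stdCDF : Differentiable ℝ stdCDF :=
  fun w => (hasDerivAt_stdCDF w).differentiableAt

lemma stdCDF_le_one (w : ℝ) : stdCDF w ≤ 1 := by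
  rw [stdCDF_eq_cdf]
  exact cdf_le_one _ w

lemma strictMono_stdCDF : StrictMono stdCDF :=
  strictMono_of_hasDerivAt_pos hasDerivAt_stdCDF stdPDF_pos

lemma stdCDF_neg (w : ℝ) : stdCDF (-w) = 1 - stdCDF w := by
  rw [stdCDF_eq_integral, integral_Iic_stdPDF, neg_neg, stdCDF_eq_integral, ← integral_stdPDF,
    ← integral_add_compl measurableSet_Iic integrable_stdPDF, Set.compl_Iic, add_sub_cancel_left]

lemma stdCDF_add_le (w : ℝ) {d : ℝ} (hd : 0 ≤ d) : stdCDF (w + d) ≤ stdCDF w + d := by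
  have h := Convex.image_sub_le_mul_sub_of_deriv_le convex_univ (C := 1)
    differentiable_stdCDF.continuous.continuousOn differentiable_stdCDF.differentiableOn
    (fun x _ => (hasDerivAt_stdCDF x).deriv ▸ stdPDF_le_one x)
    w trivial (w + d) trivial (le_add_of_nonneg_right hd)
  linarith

lemma exists_stdCDF_linear_growth (z : ℝ) :
    ∃ c > 0, ∀ d ∈ Set.Icc (0 : ℝ) 1,
      stdCDF z + c * d ≤ stdCDF (z + d) ∧ stdCDF (z - d) ≤ stdCDF z - c * d := by
  obtain ⟨w, -, hw⟩ := isCompact_Icc.exists_isMinOn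
    (Set.nonempty_Icc.2 (by linarith : z - 1 ≤ z + 1)) continuous_stdPDF.continuousOn
  have hgrowth : ∀ x ∈ Set.Icc (z - 1) (z + 1), ∀ y ∈ Set.Icc (z - 1) (z + 1), x ≤ y →
      stdPDF w * (y - x) ≤ stdCDF y - stdCDF x :=
    (convex_Icc _ _).mul_sub_le_image_sub_of_le_deriv
      differentiable_stdCDF.continuous.continuousOn differentiable_stdCDF.differentiableOn
      fun x hx => (hasDerivAt_stdCDF x).deriv ▸ hw (interior_subset hx)
  refine ⟨stdPDF w, stdPDF_pos w, fun d ⟨hd0, hd1⟩ => ⟨?_, ?_⟩⟩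
  · have := hgrowth z ⟨by linarith, by linarith⟩ (z + d) ⟨by linarith, by linarith⟩ (by linarith)
    linarith
  · have := hgrowth (z - d) ⟨by linarith, by linarith⟩ z ⟨by linarith, by linarith⟩ (by linarith)
    linarith

lemma stdCDF_stdCDFInv {ε : ℝ} (hε : ε ∈ Set.Ioo (0 : ℝ) 1) : stdCDF (stdCDFInv ε) = ε := by
  have hbot : Tendsto stdCDF atBot (𝓝 0) := stdCDF_eq_cdf ▸ tendsto_cdf_atBot _
  have htop : Tendsto stdCDF atTop (𝓝 1) := stdCDF_eq_cdf ▸ tendsto_cdf_atTop _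
  obtain ⟨z, rfl⟩ := mem_range_of_exists_le_of_exists_ge differentiable_stdCDF.continuous
    ((hbot.eventually_lt_const hε.1).exists.imp fun _ => le_of_lt)
    ((htop.eventually_const_lt hε.2).exists.imp fun _ => le_of_lt)
  simp_rw [stdCDFInv, strictMono_stdCDF.le_iff_le]
  exact congrArg stdCDF csInf_Ici

end Gaussian

section Stein

open ProbabilityTheory

/-- The bounded solution `f` of Stein's equation `f' w - w * f w = h w - 𝔼 h(Z)`, where `Z` is a
standard Gaussian. -/
noncomputable def steinSolution (h : ℝ → ℝ) (w : ℝ) : ℝ :=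
  (stdPDF w)⁻¹ * ∫ x in Set.Iic w, (h x - ∫ t, h t ∂gaussianReal 0 1) * stdPDF x

variable {h : ℝ → ℝ}

lemma integrable_gaussianReal_of_mem_Icc (hcont : Continuous h) (h01 : ∀ x, h x ∈ Set.Icc 0 1) :
    Integrable h (gaussianReal 0 1) :=
  .of_mem_Icc 0 1 hcont.aemeasurable (.of_forall h01)

lemma abs_sub_integral_gaussianReal_le_one (hcont : Continuous h) (h01 : ∀ x, h x ∈ Set.Icc 0 1)
    (w : ℝ) : |h w - ∫ t, h t ∂gaussianReal 0 1| ≤ 1 := by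
  have hmean : ∫ t, h t ∂gaussianReal 0 1 ∈ Set.Icc (0 : ℝ) 1 :=
    ⟨integral_nonneg fun x => (h01 x).1, by
      simpa using integral_mono (integrable_gaussianReal_of_mem_Icc hcont h01)
        (integrable_const 1) fun x => (h01 x).2⟩
  simpa using abs_sub_le_of_le_of_le (h01 w).1 (h01 w).2 hmean.1 hmean.2

lemma integrable_sub_integral_mul_stdPDF (hcont : Continuous h) (h01 : ∀ x, h x ∈ Set.Icc 0 1) :
    Integrable fun x => (h x - ∫ t, h t ∂gaussianReal 0 1) * stdPDF x :=
  integrable_stdPDF.bdd_mul (hcont.sub continuous_const).aestronglyMeasurable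
    (.of_forall (abs_sub_integral_gaussianReal_le_one hcont h01))

lemma integral_sub_integral_mul_stdPDF (hcont : Continuous h) (h01 : ∀ x, h x ∈ Set.Icc 0 1) :
    ∫ x, (h x - ∫ t, h t ∂gaussianReal 0 1) * stdPDF x = 0 := by
  calc ∫ x, (h x - ∫ t, h t ∂gaussianReal 0 1) * stdPDF x
      = ∫ x, (h x - ∫ t, h t ∂gaussianReal 0 1) ∂gaussianReal 0 1 := by
        simp_rw [integral_gaussianReal_eq_integral_smul one_ne_zero, smul_eq_mul, mul_comm]
    _ = 0 := by
        rw [integral_sub (integrable_gaussianReal_of_mem_Icc hcont h01) (integrable_const _)]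
        simp

lemma abs_setIntegral_sub_integral_mul_stdPDF_le (hcont : Continuous h)
    (h01 : ∀ x, h x ∈ Set.Icc 0 1) (s : Set ℝ) :
    |∫ x in s, (h x - ∫ t, h t ∂gaussianReal 0 1) * stdPDF x| ≤ ∫ x in s, stdPDF x := by
  rw [← Real.norm_eq_abs]
  refine norm_integral_le_of_norm_le integrable_stdPDF.integrableOn (.of_forall fun x => ?_)
  rw [Real.norm_eq_abs, abs_mul, abs_of_pos (stdPDF_pos x)]
  exact mul_le_of_le_one_left (stdPDF_pos x).le
    (abs_sub_integral_gaussianReal_le_one hcont h01 x)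

lemma abs_steinSolution_le (hcont : Continuous h) (h01 : ∀ x, h x ∈ Set.Icc 0 1) (w : ℝ) :
    |steinSolution h w| ≤ (stdPDF w)⁻¹ * ∫ x in Set.Ioi |w|, stdPDF x := by
  rw [steinSolution, abs_mul, abs_inv, abs_of_pos (stdPDF_pos w)]
  refine mul_le_mul_of_nonneg_left ?_ (inv_nonneg.2 (stdPDF_pos w).le)
  rcases le_total 0 w with hw | hw
  · have hsplit := integral_add_compl (measurableSet_Iic (a := w))
      (integrable_sub_integral_mul_stdPDF hcont h01)
    rw [integral_sub_integral_mul_stdPDF hcont h01, Set.compl_Iic] at hsplit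
    rw [abs_of_nonneg hw, eq_neg_of_add_eq_zero_left hsplit, abs_neg]
    exact abs_setIntegral_sub_integral_mul_stdPDF_le hcont h01 _
  · rw [abs_of_nonpos hw, ← integral_Iic_stdPDF]
    exact abs_setIntegral_sub_integral_mul_stdPDF_le hcont h01 _

lemma abs_steinSolution_le_two (hcont : Continuous h) (h01 : ∀ x, h x ∈ Set.Icc 0 1) (w : ℝ) :
    |steinSolution h w| ≤ 2 := by
  refine (abs_steinSolution_le hcont h01 w).trans ?_
  rw [inv_mul_le_iff₀ (stdPDF_pos w), ← stdPDF_abs, mul_comm]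
  exact integral_Ioi_stdPDF_le (abs_nonneg w)

lemma abs_mul_steinSolution_le_one (hcont : Continuous h) (h01 : ∀ x, h x ∈ Set.Icc 0 1)
    (w : ℝ) : |w * steinSolution h w| ≤ 1 := by
  rw [abs_mul]
  refine (mul_le_mul_of_nonneg_left (abs_steinSolution_le hcont h01 w) (abs_nonneg w)).trans ?_
  rw [mul_left_comm, inv_mul_le_iff₀ (stdPDF_pos w), mul_one, ← stdPDF_abs]
  exact mul_integral_Ioi_stdPDF_le |w|

lemma hasDerivAt_steinSolution (hcont : Continuous h) (h01 : ∀ x, h x ∈ Set.Icc 0 1) (w : ℝ) :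
    HasDerivAt (steinSolution h)
      (w * steinSolution h w + (h w - ∫ t, h t ∂gaussianReal 0 1)) w := by
  have hw := (stdPDF_pos w).ne'
  convert! ((hasDerivAt_stdPDF w).fun_inv hw).mul (hasDerivAt_integral_Iic
    (by fun_prop) (integrable_sub_integral_mul_stdPDF hcont h01) w) using 1
  simp only [steinSolution]
  field_simp

lemma differentiable_steinSolution (hcont : Continuous h) (h01 : ∀ x, h x ∈ Set.Icc 0 1) :
    Differentiable ℝ (steinSolution h) :=
  fun w => (hasDerivAt_steinSolution hcont h01 w).differentiableAt

lemma abs_mul_steinSolution_sub_le (hcont : Continuous h) (h01 : ∀ x, h x ∈ Set.Icc 0 1)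
    {R u v : ℝ} (hu : |u| ≤ R) (hv : |v| ≤ R) :
    |v * steinSolution h v - u * steinSolution h u| ≤ (2 + 2 * R) * |v - u| := by
  have hderiv (w : ℝ) : HasDerivAt (fun w => w * steinSolution h w)
      (1 * steinSolution h w +
        w * (w * steinSolution h w + (h w - ∫ t, h t ∂gaussianReal 0 1))) w :=
    (hasDerivAt_id' w).mul (hasDerivAt_steinSolution hcont h01 w)
  refine (convex_Icc (-R) R).norm_image_sub_le_of_norm_hasDerivWithin_le
    (fun w _ => (hderiv w).hasDerivWithinAt) (fun w hw => ?_) (abs_le.1 hu) (abs_le.1 hv)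
  calc |1 * steinSolution h w + w * (w * steinSolution h w + (h w - ∫ t, h t ∂gaussianReal 0 1))|
      ≤ |steinSolution h w| +
          |w| * (|w * steinSolution h w| + |h w - ∫ t, h t ∂gaussianReal 0 1|) := by
        rw [one_mul]
        refine (abs_add_le _ _).trans ?_
        rw [abs_mul w]
        gcongr
        exact abs_add_le _ _
    _ ≤ 2 + R * (1 + 1) := by
        gcongr
        · exact abs_steinSolution_le_two hcont h01 w
        · exact (abs_nonneg u).trans hu
        · exact abs_le.2 hw
        · exact abs_mul_steinSolution_le_one hcont h01 w
        · exact abs_sub_integral_gaussianReal_le_one hcont h01 w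
    _ = 2 + 2 * R := by ring

end Stein

section BerryEsseen

open ProbabilityTheory

variable {h : ℝ → ℝ} {δ : ℝ}

/-- An upper bound for the derivative of `steinSolution h` on `[z - δ, z + δ]`, for antitone `h`. -/
noncomputable def steinBound (h : ℝ → ℝ) (δ z : ℝ) : ℝ :=
  z * steinSolution h z + (h (z - δ) - ∫ t, h t ∂gaussianReal 0 1) + δ * (2 + 2 * (|z| + δ))

lemma deriv_steinSolution_le (hcont : Continuous h) (h01 : ∀ x, h x ∈ Set.Icc 0 1)
    (hanti : Antitone h) {x z : ℝ} (hx : |x - z| ≤ δ) :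
    deriv (steinSolution h) x ≤ steinBound h δ z := by
  have hx_abs : |x| ≤ |z| + δ := by linarith [abs_sub_abs_le_abs_sub x z]
  have hz_abs : |z| ≤ |z| + δ := by linarith [abs_nonneg (x - z)]
  have hlip := abs_mul_steinSolution_sub_le hcont h01 hz_abs hx_abs
  have hh := hanti (show z - δ ≤ x by linarith [abs_le.1 hx])
  have hshift : (2 + 2 * (|z| + δ)) * |x - z| ≤ (2 + 2 * (|z| + δ)) * δ := by
    have := (abs_nonneg z).trans hz_abs
    gcongr
  rw [(hasDerivAt_steinSolution hcont h01 x).deriv, steinBound]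
  linarith [le_abs_self (x * steinSolution h x - z * steinSolution h z)]

lemma steinBound_le_steinBound_add (hcont : Continuous h) (h01 : ∀ x, h x ∈ Set.Icc 0 1)
    (hanti : Antitone h) {y : ℝ} (hy : |y| ≤ δ) (z : ℝ) :
    steinBound h δ z ≤ steinBound h (2 * δ) (y + z) := by
  have hδ : 0 ≤ δ := (abs_nonneg y).trans hy
  have hdist : |z - (y + z)| = |y| := by rw [sub_add_cancel_right, abs_neg]
  have hz_abs : |z| ≤ |y + z| + δ := by linarith [abs_sub_abs_le_abs_sub z (y + z)]
  have hlip := abs_mul_steinSolution_sub_le hcont h01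
    (show |y + z| ≤ |y + z| + δ by linarith) hz_abs
  rw [hdist] at hlip
  have hshift : (2 + 2 * (|y + z| + δ)) * |y| ≤ (2 + 2 * (|y + z| + δ)) * δ := by gcongr
  have hh := hanti (show y + z - 2 * δ ≤ z - δ by linarith [abs_le.1 hy])
  have hlast : δ * (2 + 2 * (|z| + δ)) ≤ δ * (2 + 2 * (|y + z| + δ + δ)) := by gcongr
  rw [steinBound, steinBound]
  nlinarith [le_abs_self (z * steinSolution h z - (y + z) * steinSolution h (y + z))]

lemma mul_steinSolution_add_sub_le (hcont : Continuous h) (h01 : ∀ x, h x ∈ Set.Icc 0 1)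
    (hanti : Antitone h) {y : ℝ} (hy : |y| ≤ δ) (z : ℝ) :
    y * (steinSolution h (y + z) - steinSolution h z) ≤ y ^ 2 * steinBound h δ z := by
  have hdiff := differentiable_steinSolution hcont h01
  have hgrowth : ∀ a ∈ Set.Icc (z - δ) (z + δ), ∀ b ∈ Set.Icc (z - δ) (z + δ), a ≤ b →
      steinSolution h b - steinSolution h a ≤ steinBound h δ z * (b - a) :=
    (convex_Icc _ _).image_sub_le_mul_sub_of_deriv_le hdiff.continuous.continuousOn
      hdiff.differentiableOn fun x hx => deriv_steinSolution_le hcont h01 hanti <| by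
        have := interior_subset hx
        exact abs_sub_le_iff.2 ⟨by linarith [this.2], by linarith [this.1]⟩
  obtain ⟨hy_lower, hy_upper⟩ := abs_le.1 hy
  have hz_mem : z ∈ Set.Icc (z - δ) (z + δ) := ⟨by linarith, by linarith⟩
  have hyz_mem : y + z ∈ Set.Icc (z - δ) (z + δ) := ⟨by linarith, by linarith⟩
  rcases le_total 0 y with hy0 | hy0
  · nlinarith [hgrowth z hz_mem (y + z) hyz_mem (by linarith)]
  · nlinarith [hgrowth (y + z) hyz_mem z hz_mem (by linarith)]

variable {Ω : Type*} [MeasurableSpace Ω] {μ : Measure Ω} [IsProbabilityMeasure μ]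

lemma integrable_comp_of_memLp_top {E : Type*} [NormedAddCommGroup E] [ProperSpace E]
    {V : Ω → E} (hV : MemLp V ⊤ μ) {g : E → ℝ} (hg : Continuous g) :
    Integrable (fun ω => g (V ω)) μ := by
  obtain ⟨C, hC⟩ := (isCompact_closedBall 0 (lpNorm V ⊤ μ)).exists_bound_of_continuousOn
    hg.continuousOn
  refine .of_bound (hg.comp_aestronglyMeasurable hV.1) C ?_
  filter_upwards [ae_le_lpNorm_exponent_top hV] with ω hω
  exact hC _ (mem_closedBall_zero_iff.2 hω)

lemma continuous_steinBound (hcont : Continuous h) (h01 : ∀ x, h x ∈ Set.Icc 0 1) :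
    Continuous (steinBound h δ) := by
  have := (differentiable_steinSolution hcont h01).continuous
  unfold steinBound
  fun_prop

lemma integral_mul_steinSolution_add_le (hcont : Continuous h) (h01 : ∀ x, h x ∈ Set.Icc 0 1)
    (hanti : Antitone h) {Y Z : Ω → ℝ} (hindep : IndepFun Y Z μ) (hY : AEMeasurable Y μ)
    (hYδ : ∀ᵐ ω ∂μ, |Y ω| ≤ δ) (hZ : MemLp Z ⊤ μ) (hmean : μ[Y] = 0) :
    ∫ ω, Y ω * steinSolution h (Y ω + Z ω) ∂μ ≤
      μ[fun ω => Y ω ^ 2] * ∫ ω, steinBound h (2 * δ) (Y ω + Z ω) ∂μ := by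
  have hf := (differentiable_steinSolution hcont h01).continuous
  have hB (r : ℝ) : Continuous (steinBound h r) := continuous_steinBound hcont h01
  have hYtop : MemLp Y ⊤ μ := memLp_top_of_bound hY.aestronglyMeasurable δ hYδ
  have hint {g : ℝ × ℝ → ℝ} (hg : Continuous g) : Integrable (fun ω => g (Y ω, Z ω)) μ :=
    integrable_comp_of_memLp_top (.of_fst_snd ⟨hYtop, hZ⟩) hg
  have hdecouple : ∫ ω, Y ω * steinSolution h (Z ω) ∂μ = 0 :=
    (hindep.integral_fun_comp_mul_comp (f := id) hY hZ.1.aemeasurable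
      continuous_id.aestronglyMeasurable hf.aestronglyMeasurable).trans
      (by simp only [id, hmean, zero_mul])
  calc ∫ ω, Y ω * steinSolution h (Y ω + Z ω) ∂μ
      = ∫ ω, Y ω * (steinSolution h (Y ω + Z ω) - steinSolution h (Z ω)) ∂μ := by
        simp_rw [mul_sub]
        rw [integral_sub (hint (g := fun p => p.1 * steinSolution h (p.1 + p.2)) (by fun_prop))
          (hint (g := fun p => p.1 * steinSolution h p.2) (by fun_prop)), hdecouple, sub_zero]
    _ ≤ ∫ ω, Y ω ^ 2 * steinBound h δ (Z ω) ∂μ := by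
        refine integral_mono_ae
          (hint (g := fun p => p.1 * (steinSolution h (p.1 + p.2) - steinSolution h p.2))
            (by fun_prop))
          (hint (g := fun p => p.1 ^ 2 * steinBound h δ p.2) (by fun_prop)) ?_
        filter_upwards [hYδ] with ω hω
        exact mul_steinSolution_add_sub_le hcont h01 hanti hω (Z ω)
    _ = μ[fun ω => Y ω ^ 2] * ∫ ω, steinBound h δ (Z ω) ∂μ :=
        hindep.integral_fun_comp_mul_comp (f := (· ^ 2)) hY hZ.1.aemeasurable
          (by fun_prop) (hB δ).aestronglyMeasurable
    _ ≤ μ[fun ω => Y ω ^ 2] * ∫ ω, steinBound h (2 * δ) (Y ω + Z ω) ∂μ := by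
        refine mul_le_mul_of_nonneg_left ?_ (integral_nonneg fun ω => sq_nonneg (Y ω))
        refine integral_mono_ae (hint (g := fun p => steinBound h δ p.2) (by fun_prop))
          (hint (g := fun p => steinBound h (2 * δ) (p.1 + p.2)) (by fun_prop)) ?_
        filter_upwards [hYδ] with ω hω
        exact steinBound_le_steinBound_add hcont h01 hanti hω (Z ω)

lemma integral_steinBound (hcont : Continuous h) (h01 : ∀ x, h x ∈ Set.Icc 0 1) {W : Ω → ℝ}
    (hW : MemLp W ⊤ μ) :
    ∫ ω, steinBound h δ (W ω) ∂μ =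
      ∫ ω, W ω * steinSolution h (W ω) ∂μ +
        (∫ ω, h (W ω - δ) ∂μ - ∫ t, h t ∂gaussianReal 0 1) +
        δ * (2 + 2 * (∫ ω, |W ω| ∂μ + δ)) := by
  have hf := (differentiable_steinSolution hcont h01).continuous
  have hint {g : ℝ → ℝ} (hg : Continuous g) : Integrable (fun ω => g (W ω)) μ :=
    integrable_comp_of_memLp_top hW hg
  have hcentered : ∫ ω, (h (W ω - δ) - ∫ t, h t ∂gaussianReal 0 1) ∂μ =
      ∫ ω, h (W ω - δ) ∂μ - ∫ t, h t ∂gaussianReal 0 1 := by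
    rw [integral_sub (hint (g := fun w => h (w - δ)) (by fun_prop)) (integrable_const _)]
    simp only [integral_const, probReal_univ, one_smul]
  have hremainder : ∫ ω, δ * (2 + 2 * (|W ω| + δ)) ∂μ =
      δ * (2 + 2 * (∫ ω, |W ω| ∂μ + δ)) := by
    rw [integral_const_mul, integral_add (integrable_const _)
      (hint (g := fun w => 2 * (|w| + δ)) (by fun_prop)), integral_const_mul,
      integral_add (hint continuous_abs) (integrable_const _)]
    simp only [integral_const, probReal_univ, one_smul]
  simp only [steinBound]
  rw [integral_add (hint (g := fun w => w * steinSolution h w +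
      (h (w - δ) - ∫ t, h t ∂gaussianReal 0 1)) (by fun_prop))
    (hint (g := fun w => δ * (2 + 2 * (|w| + δ))) (by fun_prop)),
    integral_add (hint (g := fun w => w * steinSolution h w) (by fun_prop))
    (hint (g := fun w => h (w - δ) - ∫ t, h t ∂gaussianReal 0 1) (by fun_prop)),
    hcentered, hremainder]

variable {ι : Type*} {ξ : ι → Ω → ℝ}

lemma memLp_sum_of_bounded (hξ : ∀ i, AEMeasurable (ξ i) μ)
    (hbdd : ∀ i, ∀ᵐ ω ∂μ, |ξ i ω| ≤ δ) (s : Finset ι) (p : ENNReal) :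
    MemLp (fun ω => ∑ i ∈ s, ξ i ω) p μ :=
  memLp_finsetSum s fun i _ => .of_bound (hξ i).aestronglyMeasurable δ (hbdd i)

variable [Fintype ι]

lemma integral_sq_sum_eq_sum_integral_sq (hξ : ∀ i, AEMeasurable (ξ i) μ)
    (hbdd : ∀ i, ∀ᵐ ω ∂μ, |ξ i ω| ≤ δ) (hindep : iIndepFun ξ μ) (hmean : ∀ i, μ[ξ i] = 0) :
    ∫ ω, (∑ i, ξ i ω) ^ 2 ∂μ = ∑ i, ∫ ω, ξ i ω ^ 2 ∂μ := by
  have hξ2 (i : ι) : MemLp (ξ i) 2 μ := .of_bound (hξ i).aestronglyMeasurable δ (hbdd i)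
  have hsum := IndepFun.variance_sum (s := Finset.univ) (fun i _ => hξ2 i)
    fun i _ j _ hij => hindep.indepFun hij
  have hmean_sum : μ[∑ i, ξ i] = 0 := by
    simp only [Finset.sum_apply]
    rw [integral_finsetSum _ fun i _ => (hξ2 i).integrable one_le_two]
    exact Finset.sum_eq_zero fun i _ => hmean i
  rw [variance_of_integral_eq_zero (Finset.aemeasurable_sum _ fun i _ => hξ i) hmean_sum] at hsum
  simpa only [Finset.sum_apply, variance_of_integral_eq_zero (hξ _) (hmean _)] using hsum

lemma integral_sum_mul_steinSolution_le (hcont : Continuous h) (h01 : ∀ x, h x ∈ Set.Icc 0 1)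
    (hanti : Antitone h) (hξ : ∀ i, AEMeasurable (ξ i) μ)
    (hbdd : ∀ i, ∀ᵐ ω ∂μ, |ξ i ω| ≤ δ) (hindep : iIndepFun ξ μ) (hmean : ∀ i, μ[ξ i] = 0) :
    ∫ ω, (∑ i, ξ i ω) * steinSolution h (∑ i, ξ i ω) ∂μ ≤
      (∑ i, ∫ ω, ξ i ω ^ 2 ∂μ) * ∫ ω, steinBound h (2 * δ) (∑ i, ξ i ω) ∂μ := by
  classical
  have hf := (differentiable_steinSolution hcont h01).continuous
  have hpair (i : ι) : MemLp (fun ω => (ξ i ω, ∑ j, ξ j ω)) ⊤ μ :=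
    .of_fst_snd ⟨.of_bound (hξ i).aestronglyMeasurable δ (hbdd i),
      memLp_sum_of_bounded hξ hbdd _ _⟩
  simp_rw [Finset.sum_mul]
  rw [integral_finsetSum _ fun i _ => integrable_comp_of_memLp_top (hpair i)
    (g := fun p => p.1 * steinSolution h p.2) (by fun_prop)]
  refine Finset.sum_le_sum fun i _ => ?_
  have hsplit (ω : Ω) : ξ i ω + ∑ j ∈ Finset.univ.erase i, ξ j ω = ∑ j, ξ j ω :=
    Finset.add_sum_erase _ (ξ · ω) (Finset.mem_univ i)
  have hindep_rest : IndepFun (ξ i) (fun ω => ∑ j ∈ Finset.univ.erase i, ξ j ω) μ := by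
    simpa only [Finset.sum_fn] using
      (hindep.indepFun_finsetSum_of_notMem₀ hξ (Finset.notMem_erase i _)).symm
  simpa only [hsplit] using integral_mul_steinSolution_add_le hcont h01 hanti hindep_rest (hξ i)
    (hbdd i) (memLp_sum_of_bounded hξ hbdd _ _) (hmean i)

lemma integral_gaussianReal_le_of_antitone (hcont : Continuous h)
    (h01 : ∀ x, h x ∈ Set.Icc 0 1) (hanti : Antitone h) (hδ : 0 ≤ δ)
    (hξ : ∀ i, AEMeasurable (ξ i) μ)
    (hbdd : ∀ i, ∀ᵐ ω ∂μ, |ξ i ω| ≤ δ) (hindep : iIndepFun ξ μ) (hmean : ∀ i, μ[ξ i] = 0)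
    (hvar : ∑ i, ∫ ω, ξ i ω ^ 2 ∂μ = 1) :
    ∫ t, h t ∂gaussianReal 0 1 ≤ ∫ ω, h (∑ i, ξ i ω - 2 * δ) ∂μ + 4 * δ * (2 + 2 * δ) := by
  have hint {g : ℝ → ℝ} (hg : Continuous g) : Integrable (fun ω => g (∑ i, ξ i ω)) μ :=
    integrable_comp_of_memLp_top (memLp_sum_of_bounded hξ hbdd _ _) hg
  have hstein := integral_sum_mul_steinSolution_le hcont h01 hanti hξ hbdd hindep hmean
  have habs : ∫ ω, |∑ i, ξ i ω| ∂μ ≤ 1 := by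
    calc ∫ ω, |∑ i, ξ i ω| ∂μ ≤ ∫ ω, (1 + (∑ i, ξ i ω) ^ 2) / 2 ∂μ :=
          integral_mono (hint continuous_abs) (hint (g := fun w => (1 + w ^ 2) / 2) (by fun_prop))
            fun ω => by
              have := sq_abs (∑ i, ξ i ω)
              have := sq_nonneg (|∑ i, ξ i ω| - 1)
              linarith
      _ = 1 := by
          rw [integral_div, integral_add (integrable_const _)
            (hint (g := fun w => w ^ 2) (by fun_prop)),
            integral_sq_sum_eq_sum_integral_sq hξ hbdd hindep hmean, hvar]
          norm_num
  -- As the variances add up to `1`, the integral of `W * steinSolution h W`, where `W` is the sum,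
  -- occurs with coefficient `1` on both sides of `hstein` and cancels.
  rw [hvar, one_mul, integral_steinBound hcont h01 (memLp_sum_of_bounded hξ hbdd _ _)] at hstein
  nlinarith

/-- The piecewise linear function equal to `1` on `(-∞, z - δ]` and to `0` on `[z, ∞)`, a
continuous substitute for the indicator of a half-line. -/
noncomputable def ramp (z δ x : ℝ) : ℝ := max 0 (min 1 ((z - x) / δ))

lemma continuous_ramp (z δ : ℝ) : Continuous (ramp z δ) := by
  unfold ramp
  fun_prop

lemma ramp_mem_Icc (z δ x : ℝ) : ramp z δ x ∈ Set.Icc 0 1 :=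
  ⟨le_max_left _ _, max_le zero_le_one (min_le_left _ _)⟩

lemma antitone_ramp (z : ℝ) (hδ : 0 < δ) : Antitone (ramp z δ) := by
  intro x y hxy
  unfold ramp
  gcongr

lemma ramp_eq_one {z x : ℝ} (hδ : 0 < δ) (hx : x ≤ z - δ) : ramp z δ x = 1 := by
  rw [ramp, min_eq_left ((one_le_div hδ).2 (by linarith)), max_eq_right zero_le_one]

lemma ramp_eq_zero {z x : ℝ} (hδ : 0 < δ) (hx : z ≤ x) : ramp z δ x = 0 :=
  max_eq_left ((min_le_right _ _).trans (div_nonpos_of_nonpos_of_nonneg (by linarith) hδ.le))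

lemma stdCDF_sub_le_integral_ramp (z : ℝ) (hδ : 0 < δ) :
    stdCDF (z - δ) ≤ ∫ x, ramp z δ x ∂gaussianReal 0 1 := by
  rw [stdCDF_eq_cdf, cdf_eq_real, ← integral_indicator_one measurableSet_Iic]
  refine integral_mono ((integrable_const 1).indicator measurableSet_Iic)
    (integrable_gaussianReal_of_mem_Icc (continuous_ramp z δ) (ramp_mem_Icc z δ))
    (Set.indicator_le' (fun x hx => (ramp_eq_one hδ hx).ge) fun x _ => (ramp_mem_Icc z δ x).1)

lemma integral_ramp_le_measureReal {W : Ω → ℝ} (hW : AEMeasurable W μ) (z : ℝ) (hδ : 0 < δ) :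
    ∫ ω, ramp z δ (W ω) ∂μ ≤ μ.real {ω | W ω < z} := by
  have hnull : NullMeasurableSet {ω | W ω < z} μ := nullMeasurableSet_lt hW aemeasurable_const
  have hindicator : ∫ ω, {ω | W ω < z}.indicator 1 ω ∂μ = μ.real {ω | W ω < z} := by
    rw [integral_indicator₀ hnull]
    simp
  rw [← hindicator]
  refine integral_mono (.of_mem_Icc 0 1 ((continuous_ramp z δ).measurable.comp_aemeasurable hW)
    (.of_forall fun ω => ramp_mem_Icc z δ (W ω))) ((integrable_const 1).indicator₀ hnull)
    (Set.le_indicator (fun ω _ => (ramp_mem_Icc z δ (W ω)).2)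
      fun ω hω => (ramp_eq_zero hδ (not_lt.1 hω)).le)

lemma stdCDF_le_measureReal_sum_lt_add (hδ : 0 < δ) (hξ : ∀ i, AEMeasurable (ξ i) μ)
    (hbdd : ∀ i, ∀ᵐ ω ∂μ, |ξ i ω| ≤ δ) (hindep : iIndepFun ξ μ) (hmean : ∀ i, μ[ξ i] = 0)
    (hvar : ∑ i, ∫ ω, ξ i ω ^ 2 ∂μ = 1) (z : ℝ) :
    stdCDF z ≤ μ.real {ω | ∑ i, ξ i ω < z} + 19 * δ := by
  rcases lt_or_ge 1 δ with hδ1 | hδ1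
  · linarith [stdCDF_le_one z, measureReal_nonneg (μ := μ) (s := {ω | ∑ i, ξ i ω < z})]
  have hgauss := stdCDF_sub_le_integral_ramp (z - 2 * δ) hδ
  have hshift := stdCDF_add_le (z - 2 * δ - δ) (show 0 ≤ 3 * δ by linarith)
  rw [show z - 2 * δ - δ + 3 * δ = z by ring] at hshift
  have hstein := integral_gaussianReal_le_of_antitone (continuous_ramp (z - 2 * δ) δ)
    (ramp_mem_Icc _ δ) (antitone_ramp _ hδ) hδ.le hξ hbdd hindep hmean hvar
  have htranslate (ω : Ω) : ramp (z - 2 * δ) δ (∑ i, ξ i ω - 2 * δ) = ramp z δ (∑ i, ξ i ω) := by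
    rw [ramp, sub_sub_sub_cancel_right, ramp]
  simp_rw [htranslate] at hstein
  have hprob := integral_ramp_le_measureReal (μ := μ) (W := fun ω => ∑ i, ξ i ω)
    (memLp_sum_of_bounded hξ hbdd _ 1).1.aemeasurable z hδ
  -- The error is `3 * δ + 4 * δ * (2 + 2 * δ)`, at most `19 * δ` for `δ ≤ 1`.
  nlinarith

lemma measureReal_sum_le_le_stdCDF_add (hδ : 0 < δ) (hξ : ∀ i, AEMeasurable (ξ i) μ)
    (hbdd : ∀ i, ∀ᵐ ω ∂μ, |ξ i ω| ≤ δ) (hindep : iIndepFun ξ μ) (hmean : ∀ i, μ[ξ i] = 0)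
    (hvar : ∑ i, ∫ ω, ξ i ω ^ 2 ∂μ = 1) (z : ℝ) :
    μ.real {ω | ∑ i, ξ i ω ≤ z} ≤ stdCDF z + 19 * δ := by
  have hneg := stdCDF_le_measureReal_sum_lt_add (ξ := fun i ω => -ξ i ω) hδ
    (fun i => (hξ i).neg) (fun i => by simpa only [abs_neg] using hbdd i)
    (hindep.comp (fun _ x => -x) fun _ => measurable_neg)
    (fun i => by rw [integral_neg, hmean i, neg_zero]) (by simpa only [neg_sq] using hvar) (-z)
  have hcompl : {ω | ∑ i, -ξ i ω < -z} = {ω | ∑ i, ξ i ω ≤ z}ᶜ := by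
    ext ω
    simp only [Finset.sum_neg_distrib, neg_lt_neg_iff, Set.mem_ofPred_eq, Set.mem_compl_iff, not_le]
  have hnull : NullMeasurableSet {ω | ∑ i, ξ i ω ≤ z} μ :=
    nullMeasurableSet_le (memLp_sum_of_bounded hξ hbdd _ 1).1.aemeasurable aemeasurable_const
  rw [stdCDF_neg, hcompl, probReal_compl_eq_one_sub₀ hnull] at hneg
  linarith

theorem berry_esseen_of_bounded {Y : ι → Ω → ℝ} {B s : ℝ} (hs : 0 < s) (hB : 0 < B)
    (hY : ∀ i, AEMeasurable (Y i) μ) (hbdd : ∀ i, ∀ᵐ ω ∂μ, |Y i ω - μ[Y i]| ≤ B)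
    (hindep : iIndepFun Y μ) (hvar : ∑ i, Var[Y i; μ] = s ^ 2) (z : ℝ) :
    stdCDF z ≤ μ.real {ω | ∑ i, Y i ω < ∑ i, μ[Y i] + s * z} + 19 * (B / s) ∧
      μ.real {ω | ∑ i, Y i ω ≤ ∑ i, μ[Y i] + s * z} ≤ stdCDF z + 19 * (B / s) := by
  let ξ : ι → Ω → ℝ := fun i ω => (Y i ω - μ[Y i]) / s
  have hYint (i : ι) : Integrable (Y i) μ := by
    simpa using (Integrable.of_bound ((hY i).sub_const _).aestronglyMeasurable B (hbdd i)).fun_add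
      (integrable_const μ[Y i])
  have hξ (i : ι) : AEMeasurable (ξ i) μ := ((hY i).sub_const _).div_const _
  have hξ_bdd (i : ι) : ∀ᵐ ω ∂μ, |ξ i ω| ≤ B / s := by
    filter_upwards [hbdd i] with ω hω
    rw [abs_div, abs_of_pos hs]
    gcongr
  have hξ_indep : iIndepFun ξ μ :=
    hindep.comp (fun i x => (x - ∫ ω, Y i ω ∂μ) / s) fun i => by fun_prop
  have hξ_mean (i : ι) : μ[ξ i] = 0 := by
    rw [integral_div, integral_sub (hYint i) (integrable_const _)]
    simp
  have hξ_var : ∑ i, ∫ ω, ξ i ω ^ 2 ∂μ = 1 := by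
    simp_rw [ξ, div_pow, integral_div, ← Finset.sum_div, ← variance_eq_integral (hY _), hvar]
    exact div_self (by positivity)
  have hsum (ω : Ω) : ∑ i, ξ i ω = (∑ i, Y i ω - ∑ i, μ[Y i]) / s := by
    rw [← Finset.sum_sub_distrib, Finset.sum_div]
  have hlower :=
    stdCDF_le_measureReal_sum_lt_add (div_pos hB hs) hξ hξ_bdd hξ_indep hξ_mean hξ_var z
  have hupper :=
    measureReal_sum_le_le_stdCDF_add (div_pos hB hs) hξ hξ_bdd hξ_indep hξ_mean hξ_var z
  simp_rw [hsum, div_lt_iff₀' hs, sub_lt_iff_lt_add'] at hlower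
  simp_rw [hsum, div_le_iff₀' hs, sub_le_iff_le_add'] at hupper
  exact ⟨hlower, hupper⟩

end BerryEsseen

section SampleLaw

open ProbabilityTheory

variable {A : Type*} [Fintype A] [MeasurableSpace A] {ι : Type*} [Fintype ι]

/-- The probability mass function `P`, as a measure on the alphabet. Negative masses are truncated
to `0`. -/
noncomputable def law (P : A → ℝ) : Measure A := ∑ x, ENNReal.ofReal (P x) • Measure.dirac x

/-- The law of a sequence of independent symbols, the `i`-th of which is drawn from `p i`. -/
noncomputable def sampleLaw (p : ι → A → ℝ) : Measure (ι → A) := Measure.pi fun i => law (p i)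

instance (P : A → ℝ) : IsFiniteMeasure (law P) :=
  ⟨by simp [law, Measure.finsetSum_apply, ENNReal.sum_lt_top]⟩

instance (p : ι → A → ℝ) : IsFiniteMeasure (sampleLaw p) := by
  unfold sampleLaw
  infer_instance

lemma isProbabilityMeasure_law {P : A → ℝ} (hP : IsDist P) : IsProbabilityMeasure (law P) :=
  ⟨by simp [law, ← ENNReal.ofReal_sum_of_nonneg fun x _ => hP.1 x, hP.2]⟩

lemma isProbabilityMeasure_sampleLaw {p : ι → A → ℝ} (hp : ∀ i, IsDist (p i)) :
    IsProbabilityMeasure (sampleLaw p) := by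
  have := fun i => isProbabilityMeasure_law (hp i)
  unfold sampleLaw
  infer_instance

lemma measurePreserving_eval_sampleLaw {p : ι → A → ℝ} (hp : ∀ i, IsDist (p i)) (i : ι) :
    MeasurePreserving (Function.eval i) (sampleLaw p) (law (p i)) := by
  have := fun i => isProbabilityMeasure_law (hp i)
  exact measurePreserving_eval _ i

variable [MeasurableSingletonClass A]

lemma law_real_singleton {P : A → ℝ} (hP : ∀ x, 0 ≤ P x) (x : A) : (law P).real {x} = P x := by
  classical
  simp [law, measureReal_def, Measure.finsetSum_apply, Set.indicator_apply, hP x]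

lemma integral_law {P : A → ℝ} (hP : IsDist P) (f : A → ℝ) : ∫ x, f x ∂law P = expect P f := by
  simp_rw [integral_fintype .of_finite, law_real_singleton hP.1, smul_eq_mul, expect]

lemma variance_law {P : A → ℝ} (hP : IsDist P) (f : A → ℝ) : Var[f; law P] = varD P f := by
  rw [variance_eq_integral (measurable_of_finite f).aemeasurable, integral_law hP, integral_law hP,
    varD]

lemma sampleLaw_real_singleton {p : ι → A → ℝ} (hp : ∀ i x, 0 ≤ p i x) (ω : ι → A) :
    (sampleLaw p).real {ω} = ∏ i, p i (ω i) := by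
  rw [sampleLaw, measureReal_def, Measure.pi_singleton, ENNReal.toReal_prod]
  exact Finset.prod_congr rfl fun i _ => law_real_singleton (hp i) (ω i)

lemma sampleLaw_real_le_mul {p q : ι → A → ℝ} (hp : ∀ i x, 0 ≤ p i x) (hq : ∀ i x, 0 ≤ q i x)
    {S : Set (ι → A)} {c : ℝ} (h : ∀ ω ∈ S, ∏ i, p i (ω i) ≤ c * ∏ i, q i (ω i)) :
    (sampleLaw p).real S ≤ c * (sampleLaw q).real S := by
  classical
  rw [← S.toFinite.coe_toFinset, ← sum_measureReal_singleton, ← sum_measureReal_singleton,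
    Finset.mul_sum]
  refine Finset.sum_le_sum fun ω hω => ?_
  rw [sampleLaw_real_singleton hp, sampleLaw_real_singleton hq]
  exact h ω (S.toFinite.mem_toFinset.1 hω)

lemma sampleLaw_real_mono_of_pos {p : ι → A → ℝ} (hp : ∀ i x, 0 ≤ p i x) {S T : Set (ι → A)}
    (h : ∀ ω ∈ S, (∀ i, 0 < p i (ω i)) → ω ∈ T) :
    (sampleLaw p).real S ≤ (sampleLaw p).real T := by
  refine ENNReal.toReal_mono (measure_ne_top _ _) (measure_mono_ae ?_)
  refine (ae_iff_of_countable).2 fun ω hω hωS => h ω hωS fun i => (hp i _).lt_of_ne' fun hi => hω ?_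
  rw [← measureReal_eq_zero_iff, sampleLaw_real_singleton hp]
  exact Finset.prod_eq_zero (Finset.mem_univ i) hi

lemma iIndepFun_sampleLaw {p : ι → A → ℝ} (hp : ∀ i, IsDist (p i)) (g : ι → A → ℝ) :
    iIndepFun (fun i ω => g i (ω i)) (sampleLaw p) := by
  have := fun i => isProbabilityMeasure_law (hp i)
  exact iIndepFun_pi fun i => (measurable_of_finite (g i)).aemeasurable

lemma integral_eval_sampleLaw {p : ι → A → ℝ} (hp : ∀ i, IsDist (p i)) (i : ι) (f : A → ℝ) :
    ∫ ω, f (ω i) ∂sampleLaw p = expect (p i) f := by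
  have := fun i => isProbabilityMeasure_law (hp i)
  rw [← integral_law (hp i)]
  exact integral_comp_eval (measurable_of_finite f).aestronglyMeasurable

lemma berry_esseen_sampleLaw {p : ι → A → ℝ} (hp : ∀ i, IsDist (p i)) {g : ι → A → ℝ} {B s : ℝ}
    (hs : 0 < s) (hB : 0 < B) (hbdd : ∀ i x, |g i x - expect (p i) (g i)| ≤ B)
    (hvar : ∑ i, varD (p i) (g i) = s ^ 2) (z : ℝ) :
    stdCDF z ≤ (sampleLaw p).real {ω | ∑ i, g i (ω i) < ∑ i, expect (p i) (g i) + s * z} +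
        19 * (B / s) ∧
      (sampleLaw p).real {ω | ∑ i, g i (ω i) ≤ ∑ i, expect (p i) (g i) + s * z} ≤
        stdCDF z + 19 * (B / s) := by
  have := isProbabilityMeasure_sampleLaw hp
  have hvar_eval (i : ι) : Var[fun ω => g i (ω i); sampleLaw p] = varD (p i) (g i) := by
    rw [← variance_law (hp i)]
    exact (measurePreserving_eval_sampleLaw hp i).variance_fun_comp
      (measurable_of_finite (g i)).aemeasurable
  simpa only [integral_eval_sampleLaw hp] using berry_esseen_of_bounded hs hB
    (Y := fun i (ω : ι → A) => g i (ω i)) (fun i => (measurable_of_finite _).aemeasurable)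
    (fun i => .of_forall fun ω => by
      simpa only [integral_eval_sampleLaw hp] using hbdd i (ω i))
    (iIndepFun_sampleLaw hp g) (by simpa only [hvar_eval] using hvar) z

end SampleLaw

section Pooled

variable {A : Type*}

/-- The coordinatewise choice of `f` for the training symbols and `g` for the test symbols of the
pooled sample `Fin.append x y : Fin (N + n) → A`. It is used both for the distributions that
generate the symbols and for their information densities. -/
def pooled (f g : A → ℝ) (N n : ℕ) : Fin (N + n) → A → ℝ := Fin.append (fun _ => f) (fun _ => g)

@[simp]
lemma pooled_castAdd (f g : A → ℝ) {N n : ℕ} (i : Fin N) : pooled f g N n (Fin.castAdd n i) = f :=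
  Fin.append_left _ _ i

@[simp]
lemma pooled_natAdd (f g : A → ℝ) {N n : ℕ} (j : Fin n) : pooled f g N n (Fin.natAdd N j) = g :=
  Fin.append_right _ _ j

lemma pooled_self (f : A → ℝ) (N n : ℕ) : pooled f f N n = fun _ => f := by
  ext i
  cases i using Fin.addCases <;> simp

lemma sum_pooled_pooled (F : (A → ℝ) → (A → ℝ) → ℝ) (f₁ f₂ g₁ g₂ : A → ℝ) (N n : ℕ) :
    ∑ i, F (pooled f₁ f₂ N n i) (pooled g₁ g₂ N n i) = N * F f₁ g₁ + n * F f₂ g₂ := by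
  simp [Fin.sum_univ_add]

lemma isDist_pooled [Fintype A] {P1 P2 : A → ℝ} (h1 : IsDist P1) (h2 : IsDist P2) {N n : ℕ} :
    ∀ i, IsDist (pooled P1 P2 N n i) := by
  simp [Fin.forall_fin_add, h1, h2]

end Pooled

section Tests

variable {A : Type*} {α : ℝ} {n : ℕ}

lemma abs_trainLen_sub_le (hα : 0 ≤ α) : |(trainLen α n : ℝ) - α * n| ≤ 1 := by
  have h0 : 0 ≤ α * n := by positivity
  rw [trainLen, abs_of_nonneg (sub_nonneg.2 (Nat.le_ceil _))]
  linarith [Nat.ceil_lt_add_one h0]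

/-- The pooled samples `Fin.append x y` for which the test `φ` declares `H₂`. -/
def rejectionRegion (φ : TTest A α n) : Set (Fin (trainLen α n + n) → A) :=
  {ω | φ (fun i => ω (Fin.castAdd n i)) (fun j => ω (Fin.natAdd _ j)) = true}

lemma append_mem_rejectionRegion {φ : TTest A α n} {x : Fin (trainLen α n) → A} {y : Fin n → A} :
    Fin.append x y ∈ rejectionRegion φ ↔ φ x y = true := by
  simp [rejectionRegion]

lemma exists_rejectionRegion_eq (S : Set (Fin (trainLen α n + n) → A)) :
    ∃ φ : TTest A α n, rejectionRegion φ = S := by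
  classical
  exact ⟨fun x y => decide (Fin.append x y ∈ S), by
    ext
    simp [rejectionRegion, Fin.append_castAdd_natAdd]⟩

variable [Fintype A] [MeasurableSpace A] [MeasurableSingletonClass A]

open Classical in
lemma sampleLaw_pooled_real {P1 P2 : A → ℝ} (h1 : IsDist P1) (h2 : IsDist P2) {N n : ℕ}
    (S : Set (Fin (N + n) → A)) :
    (sampleLaw (pooled P1 P2 N n)).real S =
      ∑ x, ∑ y, if Fin.append x y ∈ S then seqProb P1 x * seqProb P2 y else 0 := by
  have hprod (x : Fin N → A) (y : Fin n → A) :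
      ∏ i, pooled P1 P2 N n i (Fin.append x y i) = seqProb P1 x * seqProb P2 y := by
    simp [Fin.prod_univ_add, seqProb]
  rw [← S.toFinite.coe_toFinset, ← sum_measureReal_singleton, S.toFinite.coe_toFinset,
    ← Fintype.sum_prod_type', ← Finset.sum_filter, Finset.sum_congr rfl fun ω _ =>
      sampleLaw_real_singleton (fun i => (isDist_pooled h1 h2 i).1) ω]
  refine (Finset.sum_equiv (Fin.appendEquiv N n) (fun xy => ?_) fun xy _ => (hprod _ _).symm).symm
  simp [Fin.appendEquiv]

lemma betaFA_eq_sampleLaw_real (φ : TTest A α n) {Q : A → ℝ} (hQ : IsDist Q) :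
    betaFA φ Q = (sampleLaw fun _ => Q).real (rejectionRegion φ) := by
  classical
  simp only [← pooled_self Q, sampleLaw_pooled_real hQ hQ, append_mem_rejectionRegion, betaFA]

lemma betaMD_eq_sampleLaw_real (φ : TTest A α n) {P1 P2 : A → ℝ} (h1 : IsDist P1)
    (h2 : IsDist P2) :
    betaMD φ P1 P2 = (sampleLaw (pooled P1 P2 _ n)).real (rejectionRegion φ)ᶜ := by
  classical
  simp only [sampleLaw_pooled_real h1 h2, Set.mem_compl_iff, append_mem_rejectionRegion,
    Bool.not_eq_true, betaMD]

/-- The exponents `lam` attained by a rejection region `S`: the exponential rate `lam` of the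
false-alarm probability holds uniformly over all distributions. -/
def achievableExponents (α : ℝ) (n : ℕ) (ε : ℝ) (P1 P2 : A → ℝ) : Set ℝ :=
  {lam | 0 ≤ lam ∧ ∃ S : Set (Fin (trainLen α n + n) → A),
    (∀ Q, IsDist Q → (sampleLaw fun _ => Q).real S ≤ Real.exp (-(n * lam))) ∧
      (sampleLaw (pooled P1 P2 _ n)).real Sᶜ ≤ ε}

lemma xiStar_eq_sSup {P1 P2 : A → ℝ} (h1 : IsDist P1) (h2 : IsDist P2) (ε : ℝ) :
    xiStar α n ε P1 P2 = sSup (achievableExponents α n ε P1 P2) := by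
  rw [xiStar, achievableExponents]
  congr! 4 with lam
  constructor
  · rintro ⟨φ, hFA, hMD⟩
    exact ⟨rejectionRegion φ, fun Q hQ => betaFA_eq_sampleLaw_real φ hQ ▸ hFA Q hQ,
      betaMD_eq_sampleLaw_real φ h1 h2 ▸ hMD⟩
  · rintro ⟨S, hFA, hMD⟩
    obtain ⟨φ, rfl⟩ := exists_rejectionRegion_eq S
    exact ⟨φ, fun Q hQ => (betaFA_eq_sampleLaw_real φ hQ).trans_le (hFA Q hQ),
      (betaMD_eq_sampleLaw_real φ h1 h2).trans_le hMD⟩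

end Tests

section EmpiricalLikelihood

lemma seqProb_le_mul_exp {A : Type*} {m : ℕ} {P q : A → ℝ} {ω : Fin m → A}
    (hP : ∀ x, 0 ≤ P x) (hq : ∀ i, 0 < q (ω i)) :
    seqProb P ω ≤ seqProb q ω * Real.exp (∑ i, (P (ω i) / q (ω i) - 1)) := by
  rw [seqProb, seqProb, Real.exp_sum, ← Finset.prod_mul_distrib]
  refine Finset.prod_le_prod (fun i _ => hP _) fun i _ => ?_
  calc P (ω i) = q (ω i) * (P (ω i) / q (ω i) - 1 + 1) := by
        rw [sub_add_cancel, mul_div_cancel₀ _ (hq i).ne']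
    _ ≤ q (ω i) * Real.exp (P (ω i) / q (ω i) - 1) :=
        mul_le_mul_of_nonneg_left (Real.add_one_le_exp _) (hq i).le

variable {A : Type*} [DecidableEq A] {m : ℕ}

lemma mul_empDist_apply (ω : Fin m → A) (x : A) :
    m * empDist ω x = ∑ i, if ω i = x then (1 : ℝ) else 0 := by
  rcases eq_or_ne m 0 with rfl | hm
  · simp
  · rw [empDist, mul_div_cancel₀ _ (Nat.cast_ne_zero.2 hm), Finset.natCast_card_filter]

lemma empDist_apply_pos (ω : Fin m → A) (i : Fin m) : 0 < empDist ω (ω i) := by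
  have hm : 0 < m := i.pos
  have : 0 < (Finset.univ.filter fun j => ω j = ω i).card := Finset.card_pos.2 ⟨i, by simp⟩
  unfold empDist
  positivity

variable [Fintype A]

lemma sum_comp_eq_mul_expect_empDist (f : A → ℝ) (ω : Fin m → A) :
    ∑ i, f (ω i) = m * expect (empDist ω) f := by
  simp only [expect, Finset.mul_sum, ← mul_assoc, mul_empDist_apply, Finset.sum_mul]
  rw [Finset.sum_comm]
  simp

lemma isDist_empDist (hm : m ≠ 0) (ω : Fin m → A) : IsDist (empDist ω) := by
  refine ⟨fun x => div_nonneg (Nat.cast_nonneg _) (Nat.cast_nonneg _), ?_⟩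
  have h := sum_comp_eq_mul_expect_empDist (fun _ => 1) ω
  have : (m : ℝ) ≠ 0 := Nat.cast_ne_zero.2 hm
  simpa [expect, this] using h

lemma seqProb_le_seqProb_empDist {Q : A → ℝ} (hQ : IsDist Q) (ω : Fin m → A) :
    seqProb Q ω ≤ seqProb (empDist ω) ω := by
  rcases eq_or_ne m 0 with rfl | hm
  · simp [seqProb]
  have hT := isDist_empDist hm ω
  have hexp : ∑ i, (Q (ω i) / empDist ω (ω i) - 1) ≤ 0 := by
    rw [sum_comp_eq_mul_expect_empDist fun x => Q x / empDist ω x - 1]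
    refine mul_nonpos_of_nonneg_of_nonpos (Nat.cast_nonneg m) ?_
    calc expect (empDist ω) (fun x => Q x / empDist ω x - 1)
        ≤ ∑ x, (Q x - empDist ω x) := Finset.sum_le_sum fun x _ => by
          rw [mul_sub, mul_one, mul_div_left_comm]
          exact sub_le_sub_right (mul_le_of_le_one_right (hQ.1 x) (div_self_le_one _)) _
      _ = 0 := by rw [Finset.sum_sub_distrib, hQ.2, hT.2, sub_self]
  calc seqProb Q ω ≤ _ := seqProb_le_mul_exp hQ.1 (empDist_apply_pos ω)
    _ ≤ seqProb (empDist ω) ω := mul_le_of_le_one_right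
        (Finset.prod_nonneg fun i _ => hT.1 _) (Real.exp_le_one_iff.2 hexp)

lemma seqProb_empDist_le {q : A → ℝ} (hq : IsDist q) {ω : Fin m → A} (hω : ∀ i, 0 < q (ω i)) :
    seqProb (empDist ω) ω ≤
      seqProb q ω * Real.exp (m * ∑ x, (empDist ω x - q x) ^ 2 / q x) := by
  rcases eq_or_ne m 0 with rfl | hm
  · simp [seqProb]
  have hT := isDist_empDist hm ω
  have habs (x : A) (hx : q x = 0) : empDist ω x = 0 := by
    have : ∀ i, ω i ≠ x := fun i hi => (hω i).ne' (hi ▸ hx)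
    simp [empDist, this]
  have hchi (x : A) : empDist ω x * (empDist ω x / q x - 1) =
      (empDist ω x - q x) ^ 2 / q x + (empDist ω x - q x) := by
    rcases eq_or_ne (q x) 0 with hx | hx
    · simp [hx, habs x hx]
    · field_simp
      ring
  refine (seqProb_le_mul_exp hT.1 hω).trans_eq ?_
  rw [sum_comp_eq_mul_expect_empDist (fun x => empDist ω x / q x - 1) ω, expect]
  simp only [hchi, Finset.sum_add_distrib, Finset.sum_sub_distrib, hT.2, hq.2, sub_self, add_zero]

end EmpiricalLikelihood

section Concentration

open ProbabilityTheory

variable {A : Type*} [Fintype A] [MeasurableSpace A] [MeasurableSingletonClass A]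
  {ι : Type*} [Fintype ι]

lemma sampleLaw_real_le_abs_sum_sub_le {p : ι → A → ℝ} (hp : ∀ i, IsDist (p i)) {f : ι → A → ℝ}
    (hf : ∀ i x, f i x ∈ Set.Icc (0 : ℝ) 1) {t : ℝ} (ht : 0 ≤ t) :
    (sampleLaw p).real {ω | t ≤ |∑ i, (f i (ω i) - expect (p i) (f i))|} ≤
      2 * Real.exp (-(2 * t ^ 2 / Fintype.card ι)) := by
  have := isProbabilityMeasure_sampleLaw hp
  have hsub (i : ι) : HasSubgaussianMGF (fun ω : ι → A => f i (ω i) - expect (p i) (f i))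
      ((‖(1 : ℝ) - 0‖₊ / 2) ^ 2) (sampleLaw p) := by
    simpa only [integral_eval_sampleLaw hp] using hasSubgaussianMGF_of_mem_Icc
      (μ := sampleLaw p) (X := fun ω : ι → A => f i (ω i)) (measurable_of_finite _).aemeasurable
      (.of_forall fun ω => hf i (ω i))
  have hexp : -t ^ 2 / (2 * ((∑ _ : ι, (‖(1 : ℝ) - 0‖₊ / 2) ^ 2 : NNReal) : ℝ)) =
      -(2 * t ^ 2 / Fintype.card ι) := by
    simp
    ring
  have hupper := HasSubgaussianMGF.measure_sum_ge_le_of_iIndepFun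
    (iIndepFun_sampleLaw hp fun i x => f i x - expect (p i) (f i))
    (s := Finset.univ) (fun i _ => hsub i) ht
  have hlower := HasSubgaussianMGF.measure_sum_ge_le_of_iIndepFun
    (iIndepFun_sampleLaw hp fun i x => -(f i x - expect (p i) (f i)))
    (s := Finset.univ) (fun i _ => (hsub i).neg) ht
  rw [hexp] at hupper hlower
  simp only [Finset.sum_neg_distrib] at hlower
  simp only [le_abs, Set.ofPred_or, two_mul (Real.exp _)]
  exact (measureReal_union_le _ _).trans (add_le_add hupper hlower)

end Concentration

section LikelihoodRatio

variable {A : Type*} {P1 P2 : A → ℝ} {α : ℝ}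

lemma iDens1_apply (x : A) : iDens1 P1 P2 α x = Real.log (P1 x / mix P1 P2 α x) := by
  rw [iDens1, mix, div_div_eq_mul_div, mul_comm]

lemma iDens2_apply (x : A) : iDens2 P1 P2 α x = Real.log (P2 x / mix P1 P2 α x) := by
  rw [iDens2, mix, div_div_eq_mul_div, mul_comm]

lemma mix_nonneg (h1 : ∀ x, 0 ≤ P1 x) (h2 : ∀ x, 0 ≤ P2 x) (hα : 0 < α) (x : A) :
    0 ≤ mix P1 P2 α x :=
  div_nonneg (add_nonneg (mul_nonneg hα.le (h1 x)) (h2 x)) (by linarith)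

/-- The logarithm of the ratio between the likelihood of the pooled sample `ω` under `(P1, P2)` and
its likelihood under i.i.d. sampling from `mix P1 P2 α`. -/
noncomputable def logLikelihoodRatio (P1 P2 : A → ℝ) (α : ℝ) {N n : ℕ} (ω : Fin (N + n) → A) : ℝ :=
  ∑ i, pooled (iDens1 P1 P2 α) (iDens2 P1 P2 α) N n i (ω i)

variable {N n : ℕ}

lemma pooled_eq_mix_mul_exp (h1 : ∀ x, 0 ≤ P1 x) (h2 : ∀ x, 0 ≤ P2 x) (hα : 0 < α)
    {i : Fin (N + n)} {x : A} (hx : 0 < pooled P1 P2 N n i x) :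
    0 < mix P1 P2 α x ∧ pooled P1 P2 N n i x =
      mix P1 P2 α x * Real.exp (pooled (iDens1 P1 P2 α) (iDens2 P1 P2 α) N n i x) := by
  have hmix : 0 < mix P1 P2 α x := by
    have := h1 x
    have := h2 x
    cases i using Fin.addCases <;> simp only [pooled_castAdd, pooled_natAdd] at hx <;>
      (unfold mix; positivity)
  refine ⟨hmix, ?_⟩
  cases i using Fin.addCases <;>
    simp only [pooled_castAdd, pooled_natAdd, iDens1_apply, iDens2_apply] at hx ⊢ <;>
    rw [Real.exp_log (div_pos hx hmix), mul_div_cancel₀ _ hmix.ne']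

lemma prod_pooled_eq (h1 : ∀ x, 0 ≤ P1 x) (h2 : ∀ x, 0 ≤ P2 x) (hα : 0 < α)
    {ω : Fin (N + n) → A} (hω : ∀ i, 0 < pooled P1 P2 N n i (ω i)) :
    ∏ i, pooled P1 P2 N n i (ω i) =
      seqProb (mix P1 P2 α) ω * Real.exp (logLikelihoodRatio P1 P2 α ω) := by
  rw [logLikelihoodRatio, Real.exp_sum, seqProb, ← Finset.prod_mul_distrib]
  exact Finset.prod_congr rfl fun i _ => (pooled_eq_mix_mul_exp h1 h2 hα (hω i)).2

end LikelihoodRatio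

section Converse

variable {A : Type*} [Fintype A] {P1 P2 : A → ℝ} {α : ℝ}

lemma isDist_mix (h1 : IsDist P1) (h2 : IsDist P2) (hα : 0 < α) : IsDist (mix P1 P2 α) := by
  refine ⟨mix_nonneg h1.1 h2.1 hα, ?_⟩
  simp only [mix]
  rw [← Finset.sum_div, Finset.sum_add_distrib, ← Finset.mul_sum, h1.2, h2.2, mul_one, add_comm,
    div_self (by positivity)]

variable [MeasurableSpace A] [MeasurableSingletonClass A] {N n : ℕ}

lemma sampleLaw_real_logLikelihoodRatio_lt_le (h1 : IsDist P1) (h2 : IsDist P2) (hα : 0 < α)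
    (S : Set (Fin (N + n) → A)) (t : ℝ) :
    (sampleLaw (pooled P1 P2 N n)).real {ω | logLikelihoodRatio P1 P2 α ω < t} ≤
      (sampleLaw (pooled P1 P2 N n)).real Sᶜ +
        Real.exp t * (sampleLaw fun _ : Fin (N + n) => mix P1 P2 α).real S := by
  have hp (i) := (isDist_pooled h1 h2 (N := N) (n := n) i).1
  have hq := (isDist_mix h1 h2 hα).1
  set T : Set (Fin (N + n) → A) :=
    {ω | logLikelihoodRatio P1 P2 α ω < t ∧ ∀ i, 0 < pooled P1 P2 N n i (ω i)}
  calc (sampleLaw (pooled P1 P2 N n)).real {ω | logLikelihoodRatio P1 P2 α ω < t}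
      ≤ (sampleLaw (pooled P1 P2 N n)).real (Sᶜ ∪ (S ∩ T)) :=
        sampleLaw_real_mono_of_pos hp fun ω hω hpos => by
          by_cases hS : ω ∈ S
          exacts [.inr ⟨hS, hω, hpos⟩, .inl hS]
    _ ≤ (sampleLaw (pooled P1 P2 N n)).real Sᶜ + (sampleLaw (pooled P1 P2 N n)).real (S ∩ T) :=
        measureReal_union_le _ _
    _ ≤ (sampleLaw (pooled P1 P2 N n)).real Sᶜ +
          Real.exp t * (sampleLaw fun _ => mix P1 P2 α).real (S ∩ T) := by
        gcongr
        refine sampleLaw_real_le_mul hp (fun _ => hq) fun ω hω => ?_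
        rw [prod_pooled_eq h1.1 h2.1 hα hω.2.2, mul_comm]
        exact mul_le_mul_of_nonneg_right (Real.exp_le_exp.2 hω.2.1.le)
          (Finset.prod_nonneg fun i _ => hq _)
    _ ≤ _ := by
        gcongr
        · exact measure_ne_top _ _
        · exact Set.inter_subset_left

end Converse

section Achievability

variable {A : Type*} [Fintype A] {P1 P2 : A → ℝ} {α : ℝ} {N n : ℕ}

/-- The pooled samples whose likelihood under `(P1, P2)` exceeds, by a factor `exp u`, their
likelihood under every i.i.d. model. -/
def likelihoodRegion (P1 P2 : A → ℝ) (N n : ℕ) (u : ℝ) : Set (Fin (N + n) → A) :=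
  {ω | ∀ Q, IsDist Q → seqProb Q ω * Real.exp u ≤ ∏ i, pooled P1 P2 N n i (ω i)}

lemma seqProb_le_of_abs_empDist_sub_le [DecidableEq A] {m : ℕ} {q Q : A → ℝ} (hq : IsDist q)
    (hQ : IsDist Q) {ω : Fin m → A} (hω : ∀ i, 0 < q (ω i)) {r : ℝ}
    (hr : ∀ x, |m * empDist ω x - m * q x| ≤ r) :
    seqProb Q ω ≤ seqProb q ω * Real.exp (r ^ 2 / m * ∑ x, (q x)⁻¹) := by
  refine (seqProb_le_seqProb_empDist hQ ω).trans ((seqProb_empDist_le hq hω).trans ?_)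
  refine mul_le_mul_of_nonneg_left (Real.exp_le_exp.2 ?_) (Finset.prod_nonneg fun i _ => hq.1 _)
  rw [Finset.mul_sum, Finset.mul_sum]
  refine Finset.sum_le_sum fun x _ => ?_
  rcases eq_or_ne (m : ℝ) 0 with hm | hm
  · simp [hm]
  calc m * ((empDist ω x - q x) ^ 2 / q x)
      = (m * empDist ω x - m * q x) ^ 2 / m * (q x)⁻¹ := by
        field_simp
    _ ≤ r ^ 2 / m * (q x)⁻¹ := by
        have := hq.1 x
        have := sq_le_sq' (abs_le.1 (hr x)).1 (abs_le.1 (hr x)).2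
        gcongr

lemma abs_mul_add_mul_sub_mix_le (h1 : IsDist P1) (h2 : IsDist P2) (hα : 0 < α)
    (hN : |(N : ℝ) - α * n| ≤ 1) (x : A) :
    |N * P1 x + n * P2 x - (N + n) * mix P1 P2 α x| ≤ 1 := by
  have hle_one {P : A → ℝ} (hP : IsDist P) : P x ≤ 1 :=
    hP.2 ▸ Finset.single_le_sum (fun y _ => hP.1 y) (Finset.mem_univ x)
  have heq : N * P1 x + n * P2 x - (N + n) * mix P1 P2 α x =
      (N - α * n) * ((P1 x - P2 x) / (1 + α)) := by
    unfold mix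
    field_simp
    ring
  have hdiff : |(P1 x - P2 x) / (1 + α)| ≤ 1 := by
    rw [abs_div, abs_of_pos (show 0 < 1 + α by linarith), div_le_one (by linarith)]
    have := abs_sub_le_of_nonneg_of_le (h1.1 x) (hle_one h1) (h2.1 x) (hle_one h2)
    linarith
  rw [heq, abs_mul]
  exact mul_le_one₀ hN (abs_nonneg _) hdiff

/-- The pooled samples whose letter counts are within `√(M log M)` of their means under `(P1, P2)`,
where `M = N + n` is the sample size. -/
def typicalSet [DecidableEq A] (P1 P2 : A → ℝ) (N n : ℕ) : Set (Fin (N + n) → A) :=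
  {ω | ∀ x, |(N + n) * empDist ω x - (N * P1 x + n * P2 x)| ≤ √((N + n) * Real.log (N + n))}

lemma mem_likelihoodRegion [DecidableEq A] (h1 : IsDist P1) (h2 : IsDist P2) (hα : 0 < α)
    (hN : |(N : ℝ) - α * n| ≤ 1) (hM : 3 ≤ N + n) {ω : Fin (N + n) → A}
    (hpos : ∀ i, 0 < pooled P1 P2 N n i (ω i)) (hω : ω ∈ typicalSet P1 P2 N n) {u : ℝ}
    (hu : u + 4 * (∑ x, (mix P1 P2 α x)⁻¹) * Real.log (N + n) ≤ logLikelihoodRatio P1 P2 α ω) :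
    ω ∈ likelihoodRegion P1 P2 N n u := by
  intro Q hQ
  have hM3 : (3 : ℝ) ≤ N + n := mod_cast hM
  have hlog : 1 ≤ Real.log (N + n) := by
    rw [Real.le_log_iff_exp_le (by linarith)]
    linarith [Real.exp_one_lt_d9]
  have hr : 1 ≤ √((N + n) * Real.log (N + n)) := Real.one_le_sqrt.2 (by nlinarith)
  have hdev (x : A) : |((N + n : ℕ) : ℝ) * empDist ω x - ((N + n : ℕ) : ℝ) * mix P1 P2 α x| ≤
      2 * √((N + n) * Real.log (N + n)) := by
    push_cast
    linarith [hω x, abs_mul_add_mul_sub_mix_le h1 h2 hα hN x,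
      abs_sub_le ((N + n) * empDist ω x) (N * P1 x + n * P2 x) ((N + n) * mix P1 P2 α x)]
  have hsq : (2 * √((N + n) * Real.log (N + n))) ^ 2 / (N + n : ℕ) = 4 * Real.log (N + n) := by
    rw [mul_pow, Real.sq_sqrt (by positivity)]
    push_cast
    field_simp
    norm_num
  have hbound := seqProb_le_of_abs_empDist_sub_le (isDist_mix h1 h2 hα) hQ
    (fun i => (pooled_eq_mix_mul_exp h1.1 h2.1 hα (hpos i)).1) hdev
  rw [hsq] at hbound
  rw [prod_pooled_eq h1.1 h2.1 hα hpos]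
  calc seqProb Q ω * Real.exp u
      ≤ seqProb (mix P1 P2 α) ω *
          Real.exp (4 * Real.log (N + n) * ∑ x, (mix P1 P2 α x)⁻¹) * Real.exp u := by gcongr
    _ ≤ seqProb (mix P1 P2 α) ω * Real.exp (logLikelihoodRatio P1 P2 α ω) := by
        rw [mul_assoc, ← Real.exp_add]
        refine mul_le_mul_of_nonneg_left (Real.exp_le_exp.2 (by linarith)) ?_
        exact Finset.prod_nonneg fun i _ => (isDist_mix h1 h2 hα).1 _

variable [MeasurableSpace A] [MeasurableSingletonClass A]

lemma sampleLaw_real_likelihoodRegion_le {Q : A → ℝ} (hQ : IsDist Q) (hP1 : IsDist P1)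
    (hP2 : IsDist P2) (u : ℝ) :
    (sampleLaw fun _ => Q).real (likelihoodRegion P1 P2 N n u) ≤ Real.exp (-u) := by
  have := isProbabilityMeasure_sampleLaw (isDist_pooled hP1 hP2 (N := N) (n := n))
  calc (sampleLaw fun _ => Q).real (likelihoodRegion P1 P2 N n u)
      ≤ Real.exp (-u) * (sampleLaw (pooled P1 P2 N n)).real (likelihoodRegion P1 P2 N n u) := by
        refine sampleLaw_real_le_mul (fun _ => hQ.1) (fun i => (isDist_pooled hP1 hP2 i).1)
          fun ω hω => ?_
        rw [Real.exp_neg, ← div_eq_inv_mul, le_div_iff₀ (Real.exp_pos u)]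
        exact hω Q hQ
    _ ≤ Real.exp (-u) := mul_le_of_le_one_right (Real.exp_pos _).le measureReal_le_one

lemma sampleLaw_real_compl_typicalSet_le [DecidableEq A] (h1 : IsDist P1) (h2 : IsDist P2)
    (hM : 0 < N + n) :
    (sampleLaw (pooled P1 P2 N n)).real (typicalSet P1 P2 N n)ᶜ ≤
      Fintype.card A * (2 / (N + n) ^ 2) := by
  have hM0 : (0 : ℝ) < N + n := mod_cast hM
  have hlog : 0 ≤ Real.log (N + n) := Real.log_nonneg (mod_cast hM)
  set r := √((N + n) * Real.log (N + n)) with hr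
  have hcount (ω : Fin (N + n) → A) (x : A) :
      ∑ i, ((if ω i = x then 1 else 0) -
        expect (pooled P1 P2 N n i) fun y => if y = x then 1 else 0) =
        (N + n) * empDist ω x - (N * P1 x + n * P2 x) := by
    have := mul_empDist_apply ω x
    push_cast at this
    rw [Finset.sum_sub_distrib, this]
    simp [expect, Fin.sum_univ_add]
  have hexp : 2 * Real.exp (-(2 * r ^ 2 / Fintype.card (Fin (N + n)))) = 2 / ((N : ℝ) + n) ^ 2 := by
    rw [hr, Real.sq_sqrt (by positivity), Fintype.card_fin, Nat.cast_add,
      mul_div_assoc, mul_div_cancel_left₀ _ hM0.ne', Real.exp_neg, two_mul (Real.log _),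
      Real.exp_add, Real.exp_log hM0, ← sq, ← div_eq_mul_inv]
  calc (sampleLaw (pooled P1 P2 N n)).real (typicalSet P1 P2 N n)ᶜ
      ≤ (sampleLaw (pooled P1 P2 N n)).real
          (⋃ x, {ω | r ≤ |(N + n) * empDist ω x - (N * P1 x + n * P2 x)|}) := by
        refine measureReal_mono (fun ω hω => ?_) (measure_ne_top _ _)
        obtain ⟨x, hx⟩ := not_forall.1 hω
        exact Set.mem_iUnion.2 ⟨x, (not_le.1 hx).le⟩
    _ ≤ ∑ x, (sampleLaw (pooled P1 P2 N n)).real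
          {ω | r ≤ |(N + n) * empDist ω x - (N * P1 x + n * P2 x)|} :=
        measureReal_iUnion_fintype_le _
    _ ≤ ∑ _ : A, 2 / ((N : ℝ) + n) ^ 2 := Finset.sum_le_sum fun x _ => by
        simp only [← hcount _ x, ← hexp]
        refine sampleLaw_real_le_abs_sum_sub_le (isDist_pooled h1 h2)
          (f := fun _ y => if y = x then 1 else 0) (fun _ y => ?_) (Real.sqrt_nonneg _)
        split_ifs <;> simp
    _ = Fintype.card A * (2 / (N + n) ^ 2) := by simp

lemma sampleLaw_real_compl_likelihoodRegion_le (h1 : IsDist P1) (h2 : IsDist P2) (hα : 0 < α)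
    (hN : |(N : ℝ) - α * n| ≤ 1) (hM : 3 ≤ N + n) (u : ℝ) :
    (sampleLaw (pooled P1 P2 N n)).real (likelihoodRegion P1 P2 N n u)ᶜ ≤
      (sampleLaw (pooled P1 P2 N n)).real {ω | logLikelihoodRatio P1 P2 α ω ≤
        u + 4 * (∑ x, (mix P1 P2 α x)⁻¹) * Real.log (N + n)} +
      Fintype.card A * (2 / (N + n) ^ 2) := by
  classical
  set T : Set (Fin (N + n) → A) := {ω | logLikelihoodRatio P1 P2 α ω ≤
    u + 4 * (∑ x, (mix P1 P2 α x)⁻¹) * Real.log (N + n)}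
  calc (sampleLaw (pooled P1 P2 N n)).real (likelihoodRegion P1 P2 N n u)ᶜ
      ≤ (sampleLaw (pooled P1 P2 N n)).real (T ∪ (typicalSet P1 P2 N n)ᶜ) := by
        refine sampleLaw_real_mono_of_pos (fun i => (isDist_pooled h1 h2 i).1) fun ω hω hpos => ?_
        by_contra hT
        rw [Set.mem_union, not_or, Set.mem_compl_iff, not_not] at hT
        exact hω (mem_likelihoodRegion h1 h2 hα hN hM hpos hT.2 (not_le.1 hT.1).le)
    _ ≤ (sampleLaw (pooled P1 P2 N n)).real T +
          (sampleLaw (pooled P1 P2 N n)).real (typicalSet P1 P2 N n)ᶜ := measureReal_union_le _ _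
    _ ≤ _ := by
        gcongr
        exact sampleLaw_real_compl_typicalSet_le h1 h2 (by omega)

end Achievability

section NonAsymptotic

variable {A : Type*} [Fintype A] {P1 P2 : A → ℝ} {α ε : ℝ} {N n : ℕ}

/-- The mean of `logLikelihoodRatio` when the pooled sample is generated by `(P1, P2)`. -/
noncomputable def llrMean (P1 P2 : A → ℝ) (α : ℝ) (N n : ℕ) : ℝ :=
  N * expect P1 (iDens1 P1 P2 α) + n * expect P2 (iDens2 P1 P2 α)

/-- The standard deviation of `logLikelihoodRatio` when the pooled sample is generated by
`(P1, P2)`. -/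
noncomputable def llrStd (P1 P2 : A → ℝ) (α : ℝ) (N n : ℕ) : ℝ :=
  √(N * varD P1 (iDens1 P1 P2 α) + n * varD P2 (iDens2 P1 P2 α))

/-- `B` bounds the deviations of both information densities from their means. -/
def DensityDeviationBound (P1 P2 : A → ℝ) (α B : ℝ) : Prop :=
  0 < B ∧ ∀ x, |iDens1 P1 P2 α x - expect P1 (iDens1 P1 P2 α)| ≤ B ∧
    |iDens2 P1 P2 α x - expect P2 (iDens2 P1 P2 α)| ≤ B

lemma exists_densityDeviationBound (P1 P2 : A → ℝ) (α : ℝ) :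
    ∃ B, DensityDeviationBound P1 P2 α B := by
  obtain ⟨B₁, hB₁⟩ := Finite.bddAbove_range fun x =>
    |iDens1 P1 P2 α x - expect P1 (iDens1 P1 P2 α)|
  obtain ⟨B₂, hB₂⟩ := Finite.bddAbove_range fun x =>
    |iDens2 P1 P2 α x - expect P2 (iDens2 P1 P2 α)|
  exact ⟨max 1 (max B₁ B₂), by positivity, fun x =>
    ⟨le_max_of_le_right (le_max_of_le_left (hB₁ ⟨x, rfl⟩)),
      le_max_of_le_right (le_max_of_le_right (hB₂ ⟨x, rfl⟩))⟩⟩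

variable [MeasurableSpace A]

lemma zero_mem_achievableExponents (hε : 0 ≤ ε) :
    0 ∈ achievableExponents α n ε P1 P2 := by
  refine ⟨le_rfl, Set.univ, fun Q hQ => ?_, by simpa using hε⟩
  have := isProbabilityMeasure_sampleLaw fun _ : Fin (trainLen α n + n) => hQ
  simp

variable [MeasurableSingletonClass A]

lemma berry_esseen_logLikelihoodRatio (h1 : IsDist P1) (h2 : IsDist P2) {B : ℝ}
    (hB : DensityDeviationBound P1 P2 α B) (hs : 0 < llrStd P1 P2 α N n) (w : ℝ) :
    stdCDF w ≤ (sampleLaw (pooled P1 P2 N n)).real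
        {ω | logLikelihoodRatio P1 P2 α ω < llrMean P1 P2 α N n + llrStd P1 P2 α N n * w} +
          19 * (B / llrStd P1 P2 α N n) ∧
      (sampleLaw (pooled P1 P2 N n)).real
        {ω | logLikelihoodRatio P1 P2 α ω ≤ llrMean P1 P2 α N n + llrStd P1 P2 α N n * w} ≤
          stdCDF w + 19 * (B / llrStd P1 P2 α N n) := by
  have hmean := sum_pooled_pooled expect P1 P2 (iDens1 P1 P2 α) (iDens2 P1 P2 α) N n
  have hvar := sum_pooled_pooled varD P1 P2 (iDens1 P1 P2 α) (iDens2 P1 P2 α) N n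
  rw [← Real.sq_sqrt (Real.sqrt_pos.1 hs).le] at hvar
  simp only [logLikelihoodRatio, llrMean, ← hmean]
  refine berry_esseen_sampleLaw (isDist_pooled h1 h2) hs hB.1 (fun i x => ?_) hvar w
  cases i using Fin.addCases
  · simpa using (hB.2 x).1
  · simpa using (hB.2 x).2

lemma sampleLaw_real_logLikelihoodRatio_lt_le_of_mem (h1 : IsDist P1) (h2 : IsDist P2)
    (hα : 0 < α) {lam : ℝ} (hlam : lam ∈ achievableExponents α n ε P1 P2) (t : ℝ) :
    (sampleLaw (pooled P1 P2 (trainLen α n) n)).real {ω | logLikelihoodRatio P1 P2 α ω < t} ≤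
      ε + Real.exp (t - n * lam) := by
  obtain ⟨-, S, hFA, hMD⟩ := hlam
  refine (sampleLaw_real_logLikelihoodRatio_lt_le h1 h2 hα S t).trans (add_le_add hMD ?_)
  rw [sub_eq_add_neg, Real.exp_add]
  exact mul_le_mul_of_nonneg_left (hFA _ (isDist_mix h1 h2 hα)) (Real.exp_pos t).le

lemma bddAbove_achievableExponents (h1 : IsDist P1) (h2 : IsDist P2) (hα : 0 < α) (hε : ε < 1)
    (hn : 0 < n) : BddAbove (achievableExponents α n ε P1 P2) := by
  have := isProbabilityMeasure_sampleLaw (isDist_pooled h1 h2 (N := trainLen α n) (n := n))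
  have hn' : (0 : ℝ) < n := mod_cast hn
  obtain ⟨t, ht⟩ := Finite.bddAbove_range fun ω : Fin (trainLen α n + n) → A =>
    logLikelihoodRatio P1 P2 α ω
  refine ⟨(t + 1 - Real.log (1 - ε)) / n, fun lam hlam => (le_div_iff₀' hn').2 ?_⟩
  have h := sampleLaw_real_logLikelihoodRatio_lt_le_of_mem h1 h2 hα hlam (t + 1)
  have huniv : {ω : Fin (trainLen α n + n) → A | logLikelihoodRatio P1 P2 α ω < t + 1} =
      Set.univ := Set.eq_univ_of_forall fun ω => (ht ⟨ω, rfl⟩).trans_lt (lt_add_one t)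
  rw [huniv, probReal_univ] at h
  have := (Real.log_le_iff_le_exp (by linarith)).2 (by linarith : 1 - ε ≤ _)
  linarith

lemma xiStar_nonneg (h1 : IsDist P1) (h2 : IsDist P2) : 0 ≤ xiStar α n ε P1 P2 := by
  rw [xiStar_eq_sSup h1 h2]
  exact Real.sSup_nonneg fun _ h => h.1

lemma mul_xiStar_le (h1 : IsDist P1) (h2 : IsDist P2) (hα : 0 < α) (hn : 0 < n) (hε : 0 ≤ ε)
    {B : ℝ} (hB : DensityDeviationBound P1 P2 α B)
    (hs : 0 < llrStd P1 P2 α (trainLen α n) n) {w r : ℝ}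
    (hw : ε + Real.exp (-r) + 19 * (B / llrStd P1 P2 α (trainLen α n) n) < stdCDF w) :
    n * xiStar α n ε P1 P2 ≤
      llrMean P1 P2 α (trainLen α n) n + llrStd P1 P2 α (trainLen α n) n * w + r := by
  have hn' : (0 : ℝ) < n := mod_cast hn
  rw [xiStar_eq_sSup h1 h2, ← le_div_iff₀' hn']
  refine csSup_le ⟨0, zero_mem_achievableExponents hε⟩ fun lam hlam => ?_
  rw [le_div_iff₀' hn']
  have hBE := (berry_esseen_logLikelihoodRatio h1 h2 hB hs w).1
  have hconv := sampleLaw_real_logLikelihoodRatio_lt_le_of_mem h1 h2 hα hlam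
    (llrMean P1 P2 α (trainLen α n) n + llrStd P1 P2 α (trainLen α n) n * w)
  have := Real.exp_lt_exp.1 (show Real.exp (-r) < _ by linarith)
  linarith

lemma le_mul_xiStar (h1 : IsDist P1) (h2 : IsDist P2) (hα : 0 < α) (hn : 3 ≤ n) (hε : ε < 1)
    {B : ℝ} (hB : DensityDeviationBound P1 P2 α B)
    (hs : 0 < llrStd P1 P2 α (trainLen α n) n) {w : ℝ}
    (hw : stdCDF w + 19 * (B / llrStd P1 P2 α (trainLen α n) n) +
      Fintype.card A * (2 / (trainLen α n + n) ^ 2) ≤ ε) :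
    llrMean P1 P2 α (trainLen α n) n + llrStd P1 P2 α (trainLen α n) n * w -
        4 * (∑ x, (mix P1 P2 α x)⁻¹) * Real.log (trainLen α n + n) ≤
      n * xiStar α n ε P1 P2 := by
  have hn' : (0 : ℝ) < n := by positivity
  set u := llrMean P1 P2 α (trainLen α n) n + llrStd P1 P2 α (trainLen α n) n * w -
        4 * (∑ x, (mix P1 P2 α x)⁻¹) * Real.log (trainLen α n + n) with hu
  rcases le_total u 0 with hu0 | hu0
  · exact hu0.trans (mul_nonneg hn'.le (xiStar_nonneg h1 h2))
  rw [xiStar_eq_sSup h1 h2, ← div_le_iff₀' hn']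
  refine le_csSup (bddAbove_achievableExponents h1 h2 hα hε (by omega))
    ⟨by positivity, likelihoodRegion P1 P2 _ n u, fun Q hQ => ?_, ?_⟩
  · rw [mul_div_cancel₀ _ hn'.ne']
    exact sampleLaw_real_likelihoodRegion_le hQ h1 h2 u
  · have hmiss := sampleLaw_real_compl_likelihoodRegion_le h1 h2 hα
      (abs_trainLen_sub_le hα.le) (by omega : 3 ≤ trainLen α n + n) u
    rw [hu, sub_add_cancel, ← hu] at hmiss
    linarith [(berry_esseen_logLikelihoodRatio h1 h2 hB hs w).2]

end NonAsymptotic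

section SecondOrder

variable {A : Type*} [Fintype A] {P P1 P2 : A → ℝ} {α ε : ℝ} {n : ℕ}

lemma varD_nonneg (hP : IsDist P) (f : A → ℝ) : 0 ≤ varD P f :=
  Finset.sum_nonneg fun x _ => mul_nonneg (hP.1 x) (sq_nonneg _)

lemma GJS_eq_expect_iDens :
    GJS P1 P2 α = α * expect P1 (iDens1 P1 P2 α) + expect P2 (iDens2 P1 P2 α) := by
  simp only [GJS, klDivR, expect, iDens1_apply, iDens2_apply]

lemma abs_llrMean_sub_mul_GJS_le (hα : 0 ≤ α) :
    |llrMean P1 P2 α (trainLen α n) n - n * GJS P1 P2 α| ≤ |expect P1 (iDens1 P1 P2 α)| := by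
  have heq : llrMean P1 P2 α (trainLen α n) n - n * GJS P1 P2 α =
      (trainLen α n - α * n) * expect P1 (iDens1 P1 P2 α) := by
    rw [llrMean, GJS_eq_expect_iDens]
    ring
  rw [heq, abs_mul]
  exact mul_le_of_le_one_left (abs_nonneg _) (abs_trainLen_sub_le hα)

lemma sqrt_mul_sqrt_disp_le_llrStd (h1 : IsDist P1) :
    √n * √(disp P1 P2 α) ≤ llrStd P1 P2 α (trainLen α n) n := by
  rw [← Real.sqrt_mul (Nat.cast_nonneg n)]
  refine Real.sqrt_le_sqrt ?_
  have := mul_le_mul_of_nonneg_right (Nat.le_ceil (α * n)) (varD_nonneg h1 (iDens1 P1 P2 α))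
  rw [disp, trainLen]
  linarith

lemma llrStd_le (h1 : IsDist P1) (hα : 0 ≤ α) (hV : 0 < disp P1 P2 α) (hn : 0 < n) :
    llrStd P1 P2 α (trainLen α n) n ≤
      √n * √(disp P1 P2 α) + varD P1 (iDens1 P1 P2 α) / √(disp P1 P2 α) := by
  set v := varD P1 (iDens1 P1 P2 α)
  have hv : 0 ≤ v := varD_nonneg h1 _
  have : 0 < √(disp P1 P2 α) := Real.sqrt_pos.2 hV
  have hvar : trainLen α n * v + n * varD P2 (iDens2 P1 P2 α) ≤ n * disp P1 P2 α + v := by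
    rw [disp]
    linarith [mul_le_mul_of_nonneg_right (abs_le.1 (abs_trainLen_sub_le hα (n := n))).2 hv]
  have hsqrt_n : 1 ≤ √(n : ℝ) := Real.one_le_sqrt.2 (mod_cast hn)
  refine Real.sqrt_le_iff.2 ⟨by positivity, hvar.trans ?_⟩
  calc n * disp P1 P2 α + v ≤ n * disp P1 P2 α + 2 * (√n * v) := by nlinarith
    _ = (√n * √(disp P1 P2 α)) ^ 2 + 2 * (√n * √(disp P1 P2 α)) * (v / √(disp P1 P2 α)) := by
        rw [mul_pow, Real.sq_sqrt (Nat.cast_nonneg n), Real.sq_sqrt hV.le]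
        field_simp
    _ ≤ (√n * √(disp P1 P2 α) + v / √(disp P1 P2 α)) ^ 2 := by
        rw [add_sq]
        exact le_add_of_nonneg_right (sq_nonneg _)

lemma exists_llrStd_mul_div_sqrt_le (h1 : IsDist P1) (hα : 0 ≤ α) (hV : 0 < disp P1 P2 α)
    {K : ℝ} (hK : 0 ≤ K) :
    ∃ C, 0 ≤ C ∧ ∀ n : ℕ, 0 < n → llrStd P1 P2 α (trainLen α n) n * (K / √n) ≤ C := by
  have hv := varD_nonneg h1 (iDens1 P1 P2 α)
  set L := √(disp P1 P2 α) + varD P1 (iDens1 P1 P2 α) / √(disp P1 P2 α) with hL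
  refine ⟨L * K, by positivity, fun n hn => ?_⟩
  have hsqrt : 1 ≤ √(n : ℝ) := Real.one_le_sqrt.2 (mod_cast hn)
  have hs : llrStd P1 P2 α (trainLen α n) n ≤ L * √n := by
    refine (llrStd_le h1 hα hV hn).trans ?_
    rw [hL, add_mul, mul_comm √(n : ℝ)]
    gcongr
    exact le_mul_of_one_le_right (by positivity) hsqrt
  rw [← mul_div_assoc, div_le_iff₀ (by positivity), mul_right_comm]
  exact mul_le_mul_of_nonneg_right hs hK

lemma llrStd_pos (h1 : IsDist P1) (hV : 0 < disp P1 P2 α) (hn : 0 < n) :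
    0 < llrStd P1 P2 α (trainLen α n) n :=
  (mul_pos (Real.sqrt_pos.2 (mod_cast hn)) (Real.sqrt_pos.2 hV)).trans_le
    (sqrt_mul_sqrt_disp_le_llrStd h1)

lemma div_llrStd_le (h1 : IsDist P1) (hV : 0 < disp P1 P2 α) (hn : 0 < n) {B : ℝ} (hB : 0 ≤ B) :
    B / llrStd P1 P2 α (trainLen α n) n ≤ B / √(disp P1 P2 α) / √n := by
  rw [div_div, mul_comm √(disp P1 P2 α)]
  exact div_le_div_of_nonneg_left hB
    (mul_pos (Real.sqrt_pos.2 (mod_cast hn)) (Real.sqrt_pos.2 hV))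
    (sqrt_mul_sqrt_disp_le_llrStd h1)

lemma eventually_one_le_log : ∀ᶠ n : ℕ in atTop, 1 ≤ Real.log n :=
  (Real.tendsto_log_atTop.comp tendsto_natCast_atTop_atTop).eventually_ge_atTop 1

lemma eventually_div_sqrt_le_one (K : ℝ) : ∀ᶠ n : ℕ in atTop, K / √n ≤ 1 :=
  ((tendsto_const_nhds.div_atTop
    (Real.tendsto_sqrt_atTop.comp tendsto_natCast_atTop_atTop)).eventually_le_const
      zero_lt_one)

lemma exists_eventually_stdCDF_add_sub (hε : ε ∈ Set.Ioo (0 : ℝ) 1) {e : ℝ} (he : 0 ≤ e) :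
    ∃ K, 0 ≤ K ∧ ∀ᶠ n : ℕ in atTop, ε + e / √n ≤ stdCDF (stdCDFInv ε + K / √n) ∧
      stdCDF (stdCDFInv ε - K / √n) ≤ ε - e / √n := by
  obtain ⟨c, hc, hgrowth⟩ := exists_stdCDF_linear_growth (stdCDFInv ε)
  refine ⟨e / c, by positivity, ?_⟩
  filter_upwards [eventually_div_sqrt_le_one (e / c)] with n hn
  have h := hgrowth (e / c / √n) ⟨by positivity, hn⟩
  rwa [stdCDF_stdCDFInv hε, ← mul_div_assoc, mul_div_cancel₀ _ hc.ne'] at h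

lemma log_trainLen_add_le (hα : 0 < α) (hn : 0 < n) :
    Real.log (trainLen α n + n) ≤ Real.log (α + 2) + Real.log n := by
  have hn' : (1 : ℝ) ≤ n := mod_cast hn
  rw [← Real.log_mul (by positivity) (by positivity)]
  refine Real.log_le_log (by positivity) ?_
  linarith [(abs_le.1 (abs_trainLen_sub_le hα.le (n := n))).2]

lemma exists_abs_llrMean_add_sub_le (h1 : IsDist P1) (hα : 0 ≤ α) (hV : 0 < disp P1 P2 α)
    (z : ℝ) :
    ∃ C, 0 ≤ C ∧ ∀ n : ℕ, 0 < n → |llrMean P1 P2 α (trainLen α n) n +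
      llrStd P1 P2 α (trainLen α n) n * z - (n * GJS P1 P2 α + √n * √(disp P1 P2 α) * z)| ≤ C := by
  have hv := varD_nonneg h1 (iDens1 P1 P2 α)
  refine ⟨|expect P1 (iDens1 P1 P2 α)| + varD P1 (iDens1 P1 P2 α) / √(disp P1 P2 α) * |z|,
    by positivity, fun n hn => ?_⟩
  have hstd : |llrStd P1 P2 α (trainLen α n) n - √n * √(disp P1 P2 α)| ≤
      varD P1 (iDens1 P1 P2 α) / √(disp P1 P2 α) := by
    rw [abs_of_nonneg (sub_nonneg.2 (sqrt_mul_sqrt_disp_le_llrStd h1))]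
    linarith [llrStd_le h1 hα hV hn]
  calc _ = |(llrMean P1 P2 α (trainLen α n) n - n * GJS P1 P2 α) +
          (llrStd P1 P2 α (trainLen α n) n - √n * √(disp P1 P2 α)) * z| := by ring_nf
    _ ≤ _ := (abs_add_le _ _).trans (add_le_add (abs_llrMean_sub_mul_GJS_le hα) ?_)
  rw [abs_mul]
  exact mul_le_mul_of_nonneg_right hstd (abs_nonneg z)

lemma two_div_sq_add_le (N : ℕ) (hn : 0 < n) : 2 / ((N : ℝ) + n) ^ 2 ≤ 2 / √n := by
  have hn1 : (1 : ℝ) ≤ n := mod_cast hn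
  have hsqrt : √(n : ℝ) ≤ n := Real.sqrt_le_iff.2 ⟨by positivity, by nlinarith⟩
  gcongr
  nlinarith [Nat.cast_nonneg (α := ℝ) N]

variable [MeasurableSpace A] [MeasurableSingletonClass A]

lemma exists_eventually_mul_xiStar_le (h1 : IsDist P1) (h2 : IsDist P2) (hα : 0 < α)
    (hV : 0 < disp P1 P2 α) (hε : ε ∈ Set.Ioo (0 : ℝ) 1) :
    ∃ C, ∀ᶠ n : ℕ in atTop, n * xiStar α n ε P1 P2 ≤ llrMean P1 P2 α (trainLen α n) n +
      llrStd P1 P2 α (trainLen α n) n * stdCDFInv ε + C * Real.log n := by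
  obtain ⟨B, hB⟩ := exists_densityDeviationBound P1 P2 α
  have hB0 := hB.1
  obtain ⟨K, hK, hΦ⟩ := exists_eventually_stdCDF_add_sub hε
    (by positivity : 0 ≤ 19 * (B / √(disp P1 P2 α)) + 2)
  obtain ⟨C, hC, hstd⟩ := exists_llrStd_mul_div_sqrt_le h1 hα.le hV hK
  refine ⟨C + 1, ?_⟩
  filter_upwards [hΦ, eventually_one_le_log, eventually_gt_atTop 0] with n hΦ hlog hn
  have hsqrt : 0 < √(n : ℝ) := Real.sqrt_pos.2 (mod_cast hn)
  have hexp : Real.exp (-(Real.log n / 2)) = 1 / √n := by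
    rw [← Real.log_sqrt (Nat.cast_nonneg n), Real.exp_neg, Real.exp_log hsqrt, one_div]
  have hw : ε + Real.exp (-(Real.log n / 2)) + 19 * (B / llrStd P1 P2 α (trainLen α n) n) <
      stdCDF (stdCDFInv ε + K / √n) := by
    have : 1 / √(n : ℝ) < 2 / √n := div_lt_div_of_pos_right one_lt_two hsqrt
    have := hΦ.1
    rw [add_div, mul_div_assoc] at this
    linarith [div_llrStd_le h1 hV hn hB0.le]
  have hle := mul_xiStar_le h1 h2 hα hn hε.1.le hB (llrStd_pos h1 hV hn) hw
  linarith [hstd n hn, le_mul_of_one_le_right hC hlog]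

lemma exists_eventually_le_mul_xiStar (h1 : IsDist P1) (h2 : IsDist P2) (hα : 0 < α)
    (hV : 0 < disp P1 P2 α) (hε : ε ∈ Set.Ioo (0 : ℝ) 1) :
    ∃ C, ∀ᶠ n : ℕ in atTop, llrMean P1 P2 α (trainLen α n) n +
      llrStd P1 P2 α (trainLen α n) n * stdCDFInv ε - C * Real.log n ≤
        n * xiStar α n ε P1 P2 := by
  obtain ⟨B, hB⟩ := exists_densityDeviationBound P1 P2 α
  have hB0 := hB.1
  obtain ⟨K, hK, hΦ⟩ := exists_eventually_stdCDF_add_sub hε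
    (by positivity : 0 ≤ 19 * (B / √(disp P1 P2 α)) + Fintype.card A * 2)
  obtain ⟨C, hC, hstd⟩ := exists_llrStd_mul_div_sqrt_le h1 hα.le hV hK
  set D := 4 * ∑ x, (mix P1 P2 α x)⁻¹
  have hD : 0 ≤ D := mul_nonneg zero_le_four
    (Finset.sum_nonneg fun x _ => inv_nonneg.2 ((isDist_mix h1 h2 hα).1 x))
  have hlogα : 0 ≤ Real.log (α + 2) := Real.log_nonneg (by linarith)
  refine ⟨C + D * (Real.log (α + 2) + 1), ?_⟩
  filter_upwards [hΦ, eventually_one_le_log, eventually_ge_atTop 3] with n hΦ hlog hn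
  have hn0 : 0 < n := by positivity
  have hw : stdCDF (stdCDFInv ε - K / √n) + 19 * (B / llrStd P1 P2 α (trainLen α n) n) +
      Fintype.card A * (2 / (trainLen α n + n) ^ 2) ≤ ε := by
    have := hΦ.2
    rw [add_div, mul_div_assoc, mul_div_assoc] at this
    linarith [div_llrStd_le h1 hV hn0 hB0.le, mul_le_mul_of_nonneg_left
      (two_div_sq_add_le (trainLen α n) hn0) (Nat.cast_nonneg (Fintype.card A))]
  have hle := le_mul_xiStar h1 h2 hα hn hε.2 hB (llrStd_pos h1 hV hn0) hw
  linarith [hstd n hn0, le_mul_of_one_le_right hC hlog,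
    le_mul_of_one_le_right (mul_nonneg hD hlogα) hlog,
    mul_le_mul_of_nonneg_left (log_trainLen_add_le hα hn0) hD]

lemma exists_eventually_abs_mul_xiStar_sub_le (h1 : IsDist P1) (h2 : IsDist P2) (hα : 0 < α)
    (hV : 0 < disp P1 P2 α) (hε : ε ∈ Set.Ioo (0 : ℝ) 1) :
    ∃ C, ∀ᶠ n : ℕ in atTop, |n * xiStar α n ε P1 P2 -
      (n * GJS P1 P2 α + √n * √(disp P1 P2 α) * stdCDFInv ε)| ≤ C * Real.log n := by
  obtain ⟨C₁, hupper⟩ := exists_eventually_mul_xiStar_le h1 h2 hα hV hε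
  obtain ⟨C₂, hlower⟩ := exists_eventually_le_mul_xiStar h1 h2 hα hV hε
  obtain ⟨C₃, hC₃, hcenter⟩ := exists_abs_llrMean_add_sub_le h1 hα.le hV (stdCDFInv ε)
  refine ⟨max C₁ C₂ + C₃, ?_⟩
  filter_upwards [hupper, hlower, eventually_one_le_log, eventually_gt_atTop 0]
    with n hupper hlower hlog hn
  have hlog0 : 0 ≤ Real.log n := zero_le_one.trans hlog
  have := abs_le.1 (hcenter n hn)
  rw [abs_le, add_mul]
  constructor <;> linarith [le_mul_of_one_le_right hC₃ hlog,
    mul_le_mul_of_nonneg_right (le_max_left C₁ C₂) hlog0,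
    mul_le_mul_of_nonneg_right (le_max_right C₁ C₂) hlog0]

end SecondOrder

/-- Corollary 1 of the paper: second-order asymptotics of two-sample
homogeneity testing: `ξ*(n,α,ε|P1,P2) = GJS(P1,P2,α) + sqrt(V(P1,P2,α)/n) Φ⁻¹(ε) + O(log n/n)`. -/
theorem xiStar_second_order {X : Type*} [Fintype X] [DecidableEq X]
    (α ε : ℝ) (hα : 0 < α) (hε : ε ∈ Set.Ioo (0 : ℝ) 1)
    (P1 P2 : X → ℝ) (h1 : IsDist P1) (h2 : IsDist P2)
    (hV : 0 < disp P1 P2 α) :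
    ∃ C > (0 : ℝ), ∃ n0 : ℕ, ∀ n ≥ n0,
      |xiStar α n ε P1 P2 - GJS P1 P2 α -
        Real.sqrt (disp P1 P2 α / n) * stdCDFInv ε| ≤ C * Real.log n / n := by
  let _ : MeasurableSpace X := ⊤
  obtain ⟨C, hC⟩ := exists_eventually_abs_mul_xiStar_sub_le h1 h2 hα hV hε
  obtain ⟨n₀, hn₀⟩ := eventually_atTop.1 (hC.and (eventually_gt_atTop 0))
  refine ⟨max C 1, by positivity, n₀, fun n hn => ?_⟩
  obtain ⟨hbound, hn_pos⟩ := hn₀ n hn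
  have hn' : (0 : ℝ) < n := mod_cast hn_pos
  have hscale : n * √(disp P1 P2 α / n) = √n * √(disp P1 P2 α) := by
    rw [Real.sqrt_div hV.le, mul_div_left_comm, Real.div_sqrt, mul_comm]
  rw [le_div_iff₀' hn', ← abs_of_pos hn', ← abs_mul, abs_of_pos hn', mul_sub, mul_sub, ← mul_assoc,
    hscale, sub_sub]
  exact hbound.trans (mul_le_mul_of_nonneg_right (le_max_left C 1) (Real.log_natCast_nonneg n))

end Classification
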